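/- arXiv:1711.00389 — 5 statements merged into one kernel-verified Lean document; each statement's English description precedes it below -/
import Mathlib

section
/- Let α, β ∈ ℂ, r > 0, κ > 0, and for z ∈ ℂ write θ(z) = ϑ₁(z/(πr); iκ). For integers ℓ, k, n, m define the weight w(n,m) = [θ(α+n+2m)·θ(β+2n)·θ(β+2n−1)·θ(α−β+1−n)·θ(α−β−n)] / [θ(α+n)·θ(β+2n+m)·θ(β+2n+m−1)·θ(α−β+1+m−n)·θ(α−β+m−n)], and define W(n,m) = [∏_{u=1}^{n−ℓ+m−k} θ(u)] / ([∏_{u=1}^{n−ℓ} θ(u)]·[∏_{u=1}^{m−k} θ(u)]) · ∏_{u=ℓ+1}^{n} [θ(α+m+k+u)/θ(α+u)] · [∏_{u=k+1}^{m} θ(β+n+ℓ+u) · ∏_{u=2ℓ+1}^{2n} θ(β+u)] / [∏_{u=2ℓ+k+1}^{2n+m} θ(β+u)] · ∏_{u=−n+1}^{−ℓ} [θ(α−β+u)·θ(α−β−1+u)] / [θ(α−β+m+u)·θ(α−β+k−1+u)]. Then for all integers n ≥ ℓ+1 and m ≥ k+1, provided every theta factor appearing in a denominator above is nonzero, the recursion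 W(n,m) = W(n,m−1) + W(n−1,m)·w(n,m) holds. -/
open scoped Real

/-- The Jacobi theta function `ϑ₁(v; τ)`, defined by its series
`ϑ₁(v; τ) = 2 ∑_{n=1}^∞ (−1)^{n−1} exp(πiτ(n−1/2)²) sin((2n−1)πv)`
(reindexed over `n : ℕ` starting from `0`). -/
noncomputable def theta1 (v τ : ℂ) : ℂ :=
  2 * ∑' n : ℕ, (-1 : ℂ) ^ n * Complex.exp (π * Complex.I * τ * ((n : ℂ) + 1 / 2) ^ 2) *
    Complex.sin ((2 * (n : ℂ) + 1) * π * v)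

/-- `θ(z) = ϑ₁(z/(πr); iκ)`. -/
noncomputable def thetaR (r κ : ℝ) (z : ℂ) : ℂ :=
  theta1 (z / (π * r)) (Complex.I * κ)

/-- The elementary elliptic weight `w(n,m)`. -/
noncomputable def wWeight (r κ : ℝ) (α β : ℂ) (n m : ℤ) : ℂ :=
  thetaR r κ (α + n + 2 * m) * thetaR r κ (β + 2 * n) * thetaR r κ (β + 2 * n - 1) *
      thetaR r κ (α - β + 1 - n) * thetaR r κ (α - β - n) /
    (thetaR r κ (α + n) * thetaR r κ (β + 2 * n + m) * thetaR r κ (β + 2 * n + m - 1) *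
      thetaR r κ (α - β + 1 + m - n) * thetaR r κ (α - β + m - n))

/-- Schlosser's product formula `W(n,m)` for the lattice-path generating function. -/
noncomputable def WProd (r κ : ℝ) (α β : ℂ) (ℓ k n m : ℤ) : ℂ :=
  (∏ u ∈ Finset.Icc (1 : ℤ) (n - ℓ + m - k), thetaR r κ (u : ℂ)) /
      ((∏ u ∈ Finset.Icc (1 : ℤ) (n - ℓ), thetaR r κ (u : ℂ)) *
        (∏ u ∈ Finset.Icc (1 : ℤ) (m - k), thetaR r κ (u : ℂ))) *
    (∏ u ∈ Finset.Icc (ℓ + 1) n, thetaR r κ (α + m + k + u) / thetaR r κ (α + u)) *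
    ((∏ u ∈ Finset.Icc (k + 1) m, thetaR r κ (β + n + ℓ + u)) *
        (∏ u ∈ Finset.Icc (2 * ℓ + 1) (2 * n), thetaR r κ (β + u)) /
      (∏ u ∈ Finset.Icc (2 * ℓ + k + 1) (2 * n + m), thetaR r κ (β + u))) *
    (∏ u ∈ Finset.Icc (-n + 1) (-ℓ),
      thetaR r κ (α - β + u) * thetaR r κ (α - β - 1 + u) /
        (thetaR r κ (α - β + m + u) * thetaR r κ (α - β + k - 1 + u)))

/-- All theta factors appearing in a denominator of `W(n,m)` are nonzero. -/
def WDenomOk (r κ : ℝ) (α β : ℂ) (ℓ k n m : ℤ) : Prop :=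
  (∀ u ∈ Finset.Icc (1 : ℤ) (n - ℓ), thetaR r κ (u : ℂ) ≠ 0) ∧
  (∀ u ∈ Finset.Icc (1 : ℤ) (m - k), thetaR r κ (u : ℂ) ≠ 0) ∧
  (∀ u ∈ Finset.Icc (ℓ + 1) n, thetaR r κ (α + u) ≠ 0) ∧
  (∀ u ∈ Finset.Icc (2 * ℓ + k + 1) (2 * n + m), thetaR r κ (β + u) ≠ 0) ∧
  (∀ u ∈ Finset.Icc (-n + 1) (-ℓ),
    thetaR r κ (α - β + m + u) ≠ 0 ∧ thetaR r κ (α - β + k - 1 + u) ≠ 0)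

/-- All theta factors appearing in the denominator of `w(n,m)` are nonzero. -/
def wDenomOk (r κ : ℝ) (α β : ℂ) (n m : ℤ) : Prop :=
  thetaR r κ (α + n) ≠ 0 ∧ thetaR r κ (β + 2 * n + m) ≠ 0 ∧
  thetaR r κ (β + 2 * n + m - 1) ≠ 0 ∧ thetaR r κ (α - β + 1 + m - n) ≠ 0 ∧
  thetaR r κ (α - β + m - n) ≠ 0

namespace ThetaAux

open Complex

/-- Half-integer theta term. -/
noncomputable def hT (τ z : ℂ) (n : ℤ) : ℂ :=
  cexp (π * I * τ * ((n : ℂ) + 1 / 2) ^ 2 + 2 * π * I * ((n : ℂ) + 1 / 2) * z)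

/-- Integer theta term. -/
noncomputable def eT (τ z : ℂ) (n : ℤ) : ℂ :=
  cexp (π * I * τ * (n : ℂ) ^ 2 + 2 * π * I * (n : ℂ) * z)

lemma summable_eT (τ z : ℂ) (hτ : 0 < τ.im) : Summable (eT τ z) := by
  refine ((summable_jacobiTheta₂_term_iff z τ).2 hτ).congr fun n => ?_
  simp only [eT, jacobiTheta₂_term]
  congr 1
  ring

lemma summable_hT (τ z : ℂ) (hτ : 0 < τ.im) : Summable (hT τ z) := by
  refine (((summable_jacobiTheta₂_term_iff (z + τ / 2) τ).2 hτ).mul_left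
    (cexp (π * I * τ / 4 + π * I * z))).congr fun n => ?_
  simp only [hT, jacobiTheta₂_term, ← Complex.exp_add]
  congr 1
  ring

lemma exp_int_pi (n : ℤ) : cexp ((n : ℂ) * (2 * π * I)) = 1 := Complex.exp_int_mul_two_pi_mul_I n

lemma theta1_eq (v τ : ℂ) (hτ : 0 < τ.im) : theta1 v τ = -∑' n : ℤ, hT τ (v + 1 / 2) n := by
  have hs := summable_hT τ (v + 1 / 2) hτ
  have h1 := hs.hasSum.nat_add_neg_add_one
  rw [← h1.tsum_eq, theta1, ← tsum_mul_left, ← tsum_neg]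
  refine tsum_congr fun n => ?_
  have e1 : hT τ (v + 1 / 2) (n : ℤ) = I * (-1) ^ n *
      cexp (π * I * τ * ((n : ℂ) + 1 / 2) ^ 2) * cexp ((2 * (n : ℂ) + 1) * π * v * I) := by
    have : I * (-1 : ℂ) ^ n = cexp (π / 2 * I) * cexp (n * (π * I)) := by
      rw [Complex.exp_pi_div_two_mul_I, Complex.exp_nat_mul, Complex.exp_pi_mul_I]
    rw [this, hT, ← Complex.exp_add, ← Complex.exp_add, ← Complex.exp_add]
    congr 1
    push_cast
    ring
  have e2 : hT τ (v + 1 / 2) (-((n : ℤ) + 1)) = -I * (-1) ^ n *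
      cexp (π * I * τ * ((n : ℂ) + 1 / 2) ^ 2) * cexp (-((2 * (n : ℂ) + 1) * π * v) * I) := by
    have h0 : cexp (-(π / 2 * I)) = -I := by
      rw [Complex.exp_neg, Complex.exp_pi_div_two_mul_I, Complex.inv_I]
    have h00 : cexp (-(π * I)) = -1 := by
      rw [Complex.exp_neg, Complex.exp_pi_mul_I]; norm_num
    have : -I * (-1 : ℂ) ^ n = cexp (-(π / 2 * I)) * cexp (n * (-(π * I))) := by
      rw [h0, Complex.exp_nat_mul, h00]
    rw [this, hT, ← Complex.exp_add, ← Complex.exp_add, ← Complex.exp_add]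
    congr 1
    push_cast
    ring
  rw [e1, e2, Complex.sin]
  ring

/-- Parity splitting of pairs of integers. -/
def splitMap : (ℤ × ℤ) ⊕ (ℤ × ℤ) → ℤ × ℤ
  | .inl p => (p.1 + p.2, p.1 - p.2)
  | .inr p => (p.1 + p.2, p.1 - p.2 - 1)

lemma splitMap_bij : Function.Bijective splitMap := by
  constructor
  · rintro (⟨a, b⟩ | ⟨a, b⟩) (⟨c, d⟩ | ⟨c, d⟩) h <;>
      simp only [splitMap, Prod.mk.injEq] at h <;>
      simp only [Sum.inl.injEq, Sum.inr.injEq, Prod.mk.injEq, reduceCtorEq] <;> omega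
  · rintro ⟨a, b⟩
    rcases Int.even_or_odd (a + b) with ⟨c, hc⟩ | ⟨c, hc⟩
    · exact ⟨.inl (c, a - c), by simp only [splitMap, Prod.mk.injEq]; omega⟩
    · exact ⟨.inr (c + 1, a - c - 1), by simp only [splitMap, Prod.mk.injEq]; omega⟩

lemma theta1_mul (x y τ : ℂ) (hτ : 0 < τ.im) :
    theta1 (x + y) τ * theta1 (x - y) τ =
      (∑' n, eT (2 * τ) (2 * x) n) * (∑' n, hT (2 * τ) (2 * y) n) -
      (∑' n, hT (2 * τ) (2 * x) n) * (∑' n, eT (2 * τ) (2 * y) n) := by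
  have hτ2 : 0 < (2 * τ).im := by simpa using hτ
  rw [theta1_eq _ _ hτ, theta1_eq _ _ hτ, neg_mul_neg,
    tsum_mul_tsum_of_summable_norm (summable_hT _ _ hτ).norm (summable_hT _ _ hτ).norm,
    tsum_mul_tsum_of_summable_norm (summable_eT _ _ hτ2).norm (summable_hT _ _ hτ2).norm,
    tsum_mul_tsum_of_summable_norm (summable_hT _ _ hτ2).norm (summable_eT _ _ hτ2).norm]
  have hs1 := summable_mul_of_summable_norm (summable_hT _ (2 * x) hτ2).norm
    (summable_eT _ (2 * y) hτ2).norm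
  have hs2 := summable_mul_of_summable_norm (summable_eT _ (2 * x) hτ2).norm
    (summable_hT _ (2 * y) hτ2).norm
  rw [← (Equiv.ofBijective _ splitMap_bij).tsum_eq]
  simp only [Equiv.ofBijective_apply]
  set F : (ℤ × ℤ) ⊕ (ℤ × ℤ) → ℂ := fun c =>
    hT τ (x + y + 1 / 2) (splitMap c).1 * hT τ (x - y + 1 / 2) (splitMap c).2 with hF
  have f1 : ∀ p, (F ∘ Sum.inl) p = -(hT (2 * τ) (2 * x) p.1 * eT (2 * τ) (2 * y) p.2) := by
    rintro ⟨a, b⟩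
    have : (-1 : ℂ) = cexp (π * I) * cexp ((a : ℂ) * (2 * π * I)) := by
      rw [exp_int_pi, Complex.exp_pi_mul_I, mul_one]
    rw [neg_eq_neg_one_mul, this]
    simp only [hF, Function.comp, splitMap, hT, eT, ← Complex.exp_add]
    congr 1
    push_cast
    ring
  have f2 : ∀ p, (F ∘ Sum.inr) p = eT (2 * τ) (2 * x) p.1 * hT (2 * τ) (2 * y) p.2 := by
    rintro ⟨a, b⟩
    rw [← one_mul (eT _ _ _ * _), ← exp_int_pi a]
    simp only [hF, Function.comp, splitMap, hT, eT, ← Complex.exp_add]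
    congr 1
    push_cast
    ring
  have g1 := hs1.hasSum.neg
  rw [← funext f1] at g1
  have g2 := hs2.hasSum
  rw [← funext f2] at g2
  rw [(HasSum.sum g1 g2).tsum_eq, tsum_congr f2]
  ring

lemma thetaR_mul (r κ : ℝ) (hκ : 0 < κ) : ∃ E O : ℂ → ℂ, ∀ x y,
    thetaR r κ (x + y) * thetaR r κ (x - y) = E x * O y - O x * E y := by
  refine ⟨fun x => ∑' n, eT (2 * (I * κ)) (2 * (x / (π * r))) n,
    fun x => ∑' n, hT (2 * (I * κ)) (2 * (x / (π * r))) n, fun x y => ?_⟩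
  have h := theta1_mul (x / (π * r)) (y / (π * r)) (I * κ) (by simpa using hκ)
  rw [← h, thetaR, thetaR, add_div, sub_div]

lemma weierstrass (r κ : ℝ) (hκ : 0 < κ) (x y z w : ℂ) :
    (thetaR r κ (x + y) * thetaR r κ (x - y)) * (thetaR r κ (z + w) * thetaR r κ (z - w)) =
    (thetaR r κ (x + z) * thetaR r κ (x - z)) * (thetaR r κ (y + w) * thetaR r κ (y - w)) +
    (thetaR r κ (x + w) * thetaR r κ (x - w)) * (thetaR r κ (z + y) * thetaR r κ (z - y)) := by
  obtain ⟨E, O, h⟩ := thetaR_mul r κ hκ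
  simp only [h]
  ring

lemma key (r κ : ℝ) (hκ : 0 < κ) (α β ℓ k n m : ℂ) :
    thetaR r κ (n - ℓ + m - k) * thetaR r κ (α + m + k + n) * thetaR r κ (β + n + ℓ + m) *
      thetaR r κ (α - β + m - n) =
    thetaR r κ (m - k) * thetaR r κ (α + m + k + ℓ) * thetaR r κ (β + 2 * n + m) *
      thetaR r κ (α - β + m - ℓ) +
    thetaR r κ (n - ℓ) * thetaR r κ (β + n + ℓ + k) * thetaR r κ (α - β + k - n) *
      thetaR r κ (α + n + 2 * m) := by
  have h := weierstrass r κ hκ ((α + 2 * n + 2 * m - ℓ) / 2) ((α + 2 * k + ℓ) / 2)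
    ((α + 2 * m + ℓ) / 2) ((2 * β - α + 2 * n + ℓ) / 2)
  ring_nf at h ⊢
  linear_combination h

lemma prod_top (f : ℤ → ℂ) {a b : ℤ} (h : a ≤ b) :
    ∏ u ∈ Finset.Icc a b, f u = (∏ u ∈ Finset.Icc a (b - 1), f u) * f b := by
  rw [← Finset.insert_Icc_sub_one_right_eq_Icc h, Finset.prod_insert (by simp), mul_comm]

lemma prod_bot (f : ℤ → ℂ) {a b : ℤ} (h : a ≤ b) :
    ∏ u ∈ Finset.Icc a b, f u = f a * ∏ u ∈ Finset.Icc (a + 1) b, f u := by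
  rw [← Finset.insert_Icc_add_one_left_eq_Icc h, Finset.prod_insert (by simp)]

lemma prod_shift (f : ℤ → ℂ) (a b : ℤ) :
    ∏ u ∈ Finset.Icc a b, f (u - 1) = ∏ u ∈ Finset.Icc (a - 1) (b - 1), f u := by
  refine Finset.prod_nbij' (fun u => u - 1) (fun u => u + 1) ?_ ?_ ?_ ?_ ?_ <;>
    simp

lemma algebra_step {A B C D F G H I J K X V tNM tN tM aNM aL aN bM b2 bk b2n b2n1 c cc cc1 c1 cn cl v w
    : ℂ} (hB : B ≠ 0) (hC : C ≠ 0) (hF : F ≠ 0) (hI : I ≠ 0) (hX : X ≠ 0) (hV : V ≠ 0)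
    (htN : tN ≠ 0) (htM : tM ≠ 0) (haN : aN ≠ 0) (hb2 : b2 ≠ 0) (hc : c ≠ 0) (hc1 : c1 ≠ 0)
    (hcn : cn ≠ 0) (hcl : cl ≠ 0) (hv : v ≠ 0)
    (hkey : tNM * aNM * bM * cn = tM * aL * b2 * cl + tN * bk * v * w) :
    (A * tNM) / ((B * tN) * (C * tM)) * ((D * aNM) / (F * aN)) *
      ((G * bM) * (H * b2n1 * b2n) / (I * c * b2)) * ((cc * J) * (cc1 * K) / ((c1 * X) * (v * V))) =
    A / ((B * tN) * C) * ((aL * D) / (F * aN)) *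
      (G * (H * b2n1 * b2n) / (I * c)) * ((cc * J) * (cc1 * K) / ((cn * c1 * X / cl) * (v * V))) +
    A / (B * (C * tM)) * (D / F) *
      ((bk * G) * H / I) * (J * K / (X * V)) *
      (w * b2n * b2n1 * cc * cc1 / (aN * b2 * c * c1 * cn)) := by
  field_simp
  linear_combination (A * D * G * H * J * K * b2n1 * b2n * cc * cc1) * hkey

end ThetaAux

set_option maxHeartbeats 4000000 in
open ThetaAux in
/-- Theorem 2.1 (Schlosser): the product formula `W` solves the lattice-path recursion
`W(n,m) = W(n,m−1) + W(n−1,m)·w(n,m)`. -/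
theorem WProd_recursion (r κ : ℝ) (hr : 0 < r) (hκ : 0 < κ) (α β : ℂ) (ℓ k n m : ℤ)
    (hn : ℓ + 1 ≤ n) (hm : k + 1 ≤ m)
    (h1 : WDenomOk r κ α β ℓ k n m) (h2 : WDenomOk r κ α β ℓ k n (m - 1))
    (h3 : WDenomOk r κ α β ℓ k (n - 1) m) (h4 : wDenomOk r κ α β n m) :
    WProd r κ α β ℓ k n m
      = WProd r κ α β ℓ k n (m - 1) + WProd r κ α β ℓ k (n - 1) m * wWeight r κ α β n m := by
  set T := thetaR r κ with hT
  obtain ⟨p1, p2, p3, p4, p5⟩ := h1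
  obtain ⟨q1, q2, q3, q4, q5⟩ := h2
  obtain ⟨s1, s2, s3, s4, s5⟩ := h3
  obtain ⟨w1, w2, w3, w4, w5⟩ := h4
  have hkey := key r κ hκ α β ℓ k n m
  rw [← hT] at *
  -- products of `W(n,m)`
  have A1 : ∏ u ∈ Finset.Icc (1 : ℤ) (n - ℓ + m - k), T (u : ℂ) =
      (∏ u ∈ Finset.Icc (1 : ℤ) (n - ℓ + m - k - 1), T (u : ℂ)) * T (n - ℓ + m - k) := by
    rw [prod_top _ (by omega)]; push_cast; rfl
  have B1 : ∏ u ∈ Finset.Icc (1 : ℤ) (n - ℓ), T (u : ℂ) =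
      (∏ u ∈ Finset.Icc (1 : ℤ) (n - ℓ - 1), T (u : ℂ)) * T (n - ℓ) := by
    rw [prod_top _ (by omega)]; push_cast; rfl
  have C1 : ∏ u ∈ Finset.Icc (1 : ℤ) (m - k), T (u : ℂ) =
      (∏ u ∈ Finset.Icc (1 : ℤ) (m - k - 1), T (u : ℂ)) * T (m - k) := by
    rw [prod_top _ (by omega)]; push_cast; rfl
  have D1 : ∏ u ∈ Finset.Icc (ℓ + 1) n, T (α + m + k + u) =
      (∏ u ∈ Finset.Icc (ℓ + 1) (n - 1), T (α + m + k + u)) * T (α + m + k + n) :=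
    prod_top _ hn
  have D2 : ∏ u ∈ Finset.Icc (ℓ + 1) n, T (α + ((m - 1 : ℤ) : ℂ) + k + u) =
      T (α + m + k + ℓ) * (∏ u ∈ Finset.Icc (ℓ + 1) (n - 1), T (α + m + k + u)) := by
    rw [← prod_bot (fun u : ℤ => T (α + m + k + u)) (by omega : ℓ ≤ n - 1)]
    rw [show Finset.Icc ℓ (n - 1) = Finset.Icc (ℓ + 1 - 1) (n - 1) by simp, ← prod_shift]
    refine Finset.prod_congr rfl fun u _ => congrArg T ?_
    push_cast; ring
  have F1 : ∏ u ∈ Finset.Icc (ℓ + 1) n, T (α + u) =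
      (∏ u ∈ Finset.Icc (ℓ + 1) (n - 1), T (α + u)) * T (α + n) :=
    prod_top _ hn
  have G1 : ∏ u ∈ Finset.Icc (k + 1) m, T (β + n + ℓ + u) =
      (∏ u ∈ Finset.Icc (k + 1) (m - 1), T (β + n + ℓ + u)) * T (β + n + ℓ + m) :=
    prod_top _ hm
  have G3 : ∏ u ∈ Finset.Icc (k + 1) m, T (β + ((n - 1 : ℤ) : ℂ) + ℓ + u) =
      T (β + n + ℓ + k) * (∏ u ∈ Finset.Icc (k + 1) (m - 1), T (β + n + ℓ + u)) := by
    rw [← prod_bot (fun u : ℤ => T (β + n + ℓ + u)) (by omega : k ≤ m - 1)]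
    rw [show Finset.Icc k (m - 1) = Finset.Icc (k + 1 - 1) (m - 1) by simp, ← prod_shift]
    refine Finset.prod_congr rfl fun u _ => congrArg T ?_
    push_cast; ring
  have H1 : ∏ u ∈ Finset.Icc (2 * ℓ + 1) (2 * n), T (β + u) =
      (∏ u ∈ Finset.Icc (2 * ℓ + 1) (2 * (n - 1)), T (β + u)) * T (β + 2 * n - 1) *
        T (β + 2 * n) := by
    rw [prod_top _ (by omega), prod_top _ (by omega),
      show 2 * n - 1 - 1 = 2 * (n - 1) by ring]
    push_cast
    rw [add_sub_assoc]
  have I2 : ∏ u ∈ Finset.Icc (2 * ℓ + k + 1) (2 * n + (m - 1)), T (β + u) =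
      (∏ u ∈ Finset.Icc (2 * ℓ + k + 1) (2 * (n - 1) + m), T (β + u)) *
        T (β + 2 * n + m - 1) := by
    rw [prod_top _ (by omega), show 2 * n + (m - 1) - 1 = 2 * (n - 1) + m by ring]
    push_cast
    congr 2
    ring
  have I1 : ∏ u ∈ Finset.Icc (2 * ℓ + k + 1) (2 * n + m), T (β + u) =
      (∏ u ∈ Finset.Icc (2 * ℓ + k + 1) (2 * (n - 1) + m), T (β + u)) *
        T (β + 2 * n + m - 1) * T (β + 2 * n + m) := by
    rw [prod_top _ (by omega), show 2 * n + m - 1 = 2 * n + (m - 1) by ring, I2]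
    push_cast
    congr 2
    ring
  have e0 : -n + 1 + 1 = -(n - 1) + 1 := by ring
  have J1 : ∏ u ∈ Finset.Icc (-n + 1) (-ℓ), T (α - β + u) =
      T (α - β + 1 - n) * ∏ u ∈ Finset.Icc (-(n - 1) + 1) (-ℓ), T (α - β + u) := by
    rw [prod_bot _ (by omega), e0]
    congr 2
    push_cast; ring
  have K1 : ∏ u ∈ Finset.Icc (-n + 1) (-ℓ), T (α - β - 1 + u) =
      T (α - β - n) * ∏ u ∈ Finset.Icc (-(n - 1) + 1) (-ℓ), T (α - β - 1 + u) := by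
    rw [prod_bot _ (by omega), e0]
    congr 2
    push_cast; ring
  have V1 : ∏ u ∈ Finset.Icc (-n + 1) (-ℓ), T (α - β + k - 1 + u) =
      T (α - β + k - n) * ∏ u ∈ Finset.Icc (-(n - 1) + 1) (-ℓ), T (α - β + k - 1 + u) := by
    rw [prod_bot _ (by omega), e0]
    congr 2
    push_cast; ring
  have X1 : ∏ u ∈ Finset.Icc (-n + 1) (-ℓ), T (α - β + m + u) =
      T (α - β + 1 + m - n) * ∏ u ∈ Finset.Icc (-(n - 1) + 1) (-ℓ), T (α - β + m + u) := by
    rw [prod_bot _ (by omega), e0]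
    congr 2
    push_cast; ring
  have hcl : T (α - β + m - ℓ) ≠ 0 := by
    have := (p5 (-ℓ) (by simp only [Finset.mem_Icc]; omega)).1
    push_cast at this
    rwa [← sub_eq_add_neg] at this
  have X2 : ∏ u ∈ Finset.Icc (-n + 1) (-ℓ), T (α - β + ((m - 1 : ℤ) : ℂ) + u) =
      T (α - β + m - n) * T (α - β + 1 + m - n) *
        (∏ u ∈ Finset.Icc (-(n - 1) + 1) (-ℓ), T (α - β + m + u)) / T (α - β + m - ℓ) := by
    rw [eq_div_iff hcl, mul_assoc (T (α - β + m - n)), ← X1]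
    have a1 := prod_top (fun u : ℤ => T (α - β + m + u)) (by omega : -n ≤ -ℓ)
    have a2 := prod_bot (fun u : ℤ => T (α - β + m + u)) (by omega : -n ≤ -ℓ)
    have a3 := prod_shift (fun u : ℤ => T (α - β + m + u)) (-n + 1) (-ℓ)
    rw [show -n + 1 - 1 = -n by ring] at a3
    rw [a2, ← a3] at a1
    push_cast at a1 ⊢
    simp only [← sub_eq_add_neg] at a1 ⊢
    rw [a1]
    congr 1
    refine Finset.prod_congr rfl fun u _ => congrArg T ?_
    ring
  have nB : ∏ u ∈ Finset.Icc (1 : ℤ) (n - ℓ), T (u : ℂ) ≠ 0 := Finset.prod_ne_zero_iff.2 p1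
  have nC : ∏ u ∈ Finset.Icc (1 : ℤ) (m - k), T (u : ℂ) ≠ 0 := Finset.prod_ne_zero_iff.2 p2
  have nF : ∏ u ∈ Finset.Icc (ℓ + 1) n, T (α + u) ≠ 0 := Finset.prod_ne_zero_iff.2 p3
  have nI : ∏ u ∈ Finset.Icc (2 * ℓ + k + 1) (2 * n + m), T (β + u) ≠ 0 :=
    Finset.prod_ne_zero_iff.2 p4
  have nX : ∏ u ∈ Finset.Icc (-n + 1) (-ℓ), T (α - β + m + u) ≠ 0 :=
    Finset.prod_ne_zero_iff.2 fun u hu => (p5 u hu).1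
  have nV : ∏ u ∈ Finset.Icc (-n + 1) (-ℓ), T (α - β + k - 1 + u) ≠ 0 :=
    Finset.prod_ne_zero_iff.2 fun u hu => (p5 u hu).2
  rw [B1, mul_ne_zero_iff] at nB
  rw [C1, mul_ne_zero_iff] at nC
  rw [F1, mul_ne_zero_iff] at nF
  rw [I1, mul_ne_zero_iff, mul_ne_zero_iff] at nI
  rw [X1, mul_ne_zero_iff] at nX
  rw [V1, mul_ne_zero_iff] at nV
  simp only [WProd, wWeight, ← hT, Finset.prod_div_distrib, Finset.prod_mul_distrib]
  rw [show n - ℓ + (m - 1) - k = n - ℓ + m - k - 1 by ring,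
    show n - 1 - ℓ + m - k = n - ℓ + m - k - 1 by ring,
    show n - 1 - ℓ = n - ℓ - 1 by ring, show m - 1 - k = m - k - 1 by ring,
    A1, B1, C1, D1, D2, F1, G1, G3, H1, I1, I2, J1, K1, V1, X1, X2]
  exact algebra_step nB.1 nC.1 nF.1 nI.1.1 nX.2 nV.2 nB.2 nC.2 w1 w2 w3 w4 w5 hcl nV.1 hkey
end

section
/- For every κ > 0 and every real v with 0 < v < 1, the value ϑ₁(v; iκ) is a positive real number; and for every real v with −1 < v < 0, ϑ₁(v; iκ) is a negative real number. -/
open scoped Real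

lemma theta1_aux_pos (c : ℕ → ℝ) (h0 : 0 < c 0) (h : ∀ k, |c k| ≤ (1 / 3 : ℝ) ^ k * c 0) :
    Summable c ∧ 0 < ∑' k, c k := by
  have hg : HasSum (fun k : ℕ => (1 / 3 : ℝ) ^ k) (1 - 1 / 3)⁻¹ :=
    hasSum_geometric_of_lt_one (by norm_num) (by norm_num)
  have hg0 : Summable (fun k : ℕ => (1 / 3 : ℝ) ^ k * c 0) := hg.summable.mul_right _
  have hs : Summable c := hg0.of_norm_bounded h
  refine ⟨hs, ?_⟩
  have h1 : HasSum (fun k : ℕ => (1 / 3 : ℝ) ^ (k + 1) * c 0) (1 / 2 * c 0) := by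
    have := (hg.mul_left (1 / 3)).mul_right (c 0)
    have e1 : (fun k : ℕ => (1 / 3 : ℝ) ^ (k + 1) * c 0) =
        fun k : ℕ => 1 / 3 * (1 / 3 : ℝ) ^ k * c 0 := by funext k; ring
    have e2 : 1 / 2 * c 0 = 1 / 3 * (1 - 1 / 3 : ℝ)⁻¹ * c 0 := by norm_num
    rw [e1, e2]
    exact this
  rw [hs.tsum_eq_zero_add]
  have h2 : ∑' k, -c (k + 1) ≤ 1 / 2 * c 0 := by
    rw [← h1.tsum_eq]
    refine Summable.tsum_le_tsum (fun k => (neg_le_abs _).trans (h (k + 1))) ?_ h1.summable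
    exact ((summable_nat_add_iff 1).2 hs).neg
  rw [tsum_neg] at h2
  linarith

lemma theta1_aux_sin (x : ℝ) (n : ℕ) : |Real.sin ((2 * n + 1) * x)| ≤ (2 * n + 1) * |Real.sin x| := by
  induction n with
  | zero => simp
  | succ n ih =>
    have e : ((2 * ((n + 1 : ℕ) : ℝ) + 1) * x) = (2 * n + 1) * x + 2 * x := by push_cast; ring
    rw [e, Real.sin_add, Real.sin_two_mul]
    have a1 : |Real.sin ((2 * n + 1) * x) * Real.cos (2 * x)| ≤ (2 * n + 1) * |Real.sin x| := by
      rw [abs_mul]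
      exact (mul_le_of_le_one_right (abs_nonneg _) (Real.abs_cos_le_one _)).trans ih
    have a2 : |Real.cos ((2 * n + 1) * x) * (2 * Real.sin x * Real.cos x)| ≤ 2 * |Real.sin x| := by
      rw [abs_mul, abs_mul, abs_mul, abs_two]
      refine (mul_le_of_le_one_left (by positivity) (Real.abs_cos_le_one _)).trans ?_
      exact mul_le_of_le_one_right (by positivity) (Real.abs_cos_le_one _)
    refine (abs_add_le _ _).trans ((add_le_add a1 a2).trans (le_of_eq ?_))
    push_cast; ring

lemma theta1_aux_three (n : ℕ) : (2 * n + 1 : ℝ) ≤ 3 ^ n := by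
  have := one_add_mul_le_pow (a := (2 : ℝ)) (by norm_num) n
  norm_num at this
  linarith

lemma theta1_aux_exp_pi : Real.exp (-π) ≤ 1 / 9 := by
  have h3 := Real.pi_gt_three
  have h1 : (2.7 : ℝ) < Real.exp 1 := lt_trans (by norm_num) Real.exp_one_gt_d9
  have h2 : Real.exp 3 ≤ Real.exp π := Real.exp_le_exp.2 h3.le
  have h4 : Real.exp 3 = Real.exp 1 ^ 3 := by rw [← Real.exp_nat_mul]; norm_num
  have h5 : (2.7 : ℝ) ^ 3 ≤ Real.exp 1 ^ 3 := by gcongr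
  rw [Real.exp_neg, inv_eq_one_div]
  apply one_div_le_one_div_of_le (by norm_num)
  norm_num at h5
  linarith

lemma theta1_aux_decay (A : ℝ) (hA : π ≤ A) (k : ℕ) :
    (2 * k + 1) * Real.exp (-A * k) ≤ (1 / 3 : ℝ) ^ k := by
  have h : Real.exp (-A * k) ≤ (1 / 9 : ℝ) ^ k := by
    rw [mul_comm, Real.exp_nat_mul]
    gcongr
    exact (Real.exp_le_exp.2 (neg_le_neg hA)).trans theta1_aux_exp_pi
  calc _ ≤ (3 : ℝ) ^ k * (1 / 9 : ℝ) ^ k := by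
        gcongr
        exact theta1_aux_three k
    _ = _ := by rw [← mul_pow]; norm_num

/-- Real form of the series. -/
lemma theta1_real (v κ : ℝ) : theta1 (v : ℂ) (Complex.I * κ) =
    ((2 * ∑' n : ℕ, (-1 : ℝ) ^ n * Real.exp (-π * κ * (n + 1 / 2) ^ 2) *
      Real.sin ((2 * n + 1) * π * v) : ℝ) : ℂ) := by
  rw [theta1]
  push_cast
  congr 1
  refine tsum_congr fun n => ?_
  congr 3
  linear_combination (π * κ * ((n : ℂ) + 1 / 2) ^ 2) * Complex.I_mul_I

lemma theta1_neg (v τ : ℂ) : theta1 (-v) τ = - theta1 v τ := by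
  rw [theta1, theta1, ← mul_neg, ← tsum_neg]
  congr 1
  refine tsum_congr fun n => ?_
  rw [mul_neg, Complex.sin_neg, mul_neg]

lemma theta1_one_sub (v τ : ℂ) : theta1 (1 - v) τ = theta1 v τ := by
  rw [theta1, theta1]
  congr 1
  refine tsum_congr fun n => ?_
  congr 1
  have e : (2 * (n : ℂ) + 1) * π * (1 - v) = π - (2 * (n : ℂ) + 1) * π * v + n * (2 * π) := by ring
  rw [e, Complex.sin_add_nat_mul_two_pi, Complex.sin_pi_sub]

lemma theta1_pos_large (κ : ℝ) (hκ : 1 ≤ κ) (v : ℝ) (h0 : 0 < v) (h1 : v < 1) :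
    ∃ c : ℝ, 0 < c ∧ theta1 (v : ℂ) (Complex.I * κ) = (c : ℂ) := by
  refine ⟨_, ?_, theta1_real v κ⟩
  have hs : 0 < Real.sin (π * v) :=
    Real.sin_pos_of_pos_of_lt_pi (by positivity) (by nlinarith [Real.pi_pos])
  refine mul_pos two_pos (theta1_aux_pos _ ?_ fun k => ?_).2
  · simp only [pow_zero, Nat.cast_zero, mul_zero, zero_add, one_mul]
    positivity
  · simp only [pow_zero, Nat.cast_zero, mul_zero, zero_add, one_mul, abs_mul, abs_pow, abs_neg,
      abs_one, one_pow, Real.abs_exp]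
    have hsin := theta1_aux_sin (π * v) k
    rw [abs_of_pos hs, ← mul_assoc] at hsin
    have hA : π ≤ π * κ := by nlinarith [Real.pi_pos]
    have he : Real.exp (-π * κ * (k + 1 / 2) ^ 2) ≤
        Real.exp (-(π * κ) * k) * Real.exp (-π * κ * (1 / 2) ^ 2) := by
      rw [← Real.exp_add, Real.exp_le_exp]
      have : 0 ≤ π * κ * (k : ℝ) ^ 2 := by positivity
      nlinarith
    calc _ ≤ (Real.exp (-(π * κ) * k) * Real.exp (-π * κ * (1 / 2) ^ 2)) *
          ((2 * k + 1) * Real.sin (π * v)) := by gcongr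
      _ = ((2 * k + 1) * Real.exp (-(π * κ) * k)) *
          (Real.exp (-π * κ * (1 / 2) ^ 2) * Real.sin (π * v)) := by ring
      _ ≤ _ := by
        gcongr
        exact theta1_aux_decay _ hA k

lemma theta1_aux_geom (x : ℝ) (h0 : 0 ≤ x) (h1 : x ≤ 1) (k : ℕ) :
    1 - x ^ (2 * k + 1) ≤ (2 * k + 1) * (1 - x) := by
  have := one_add_mul_le_pow (a := x - 1) (by linarith) (2 * k + 1)
  rw [add_sub_cancel] at this
  push_cast at this
  linarith

lemma theta1_aux_split (z τ : ℂ) (hτ : 0 < τ.im) : jacobiTheta₂ z τ =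
    ∑' n : ℕ, (jacobiTheta₂_term (n : ℤ) z τ + jacobiTheta₂_term (-((n : ℤ) + 1)) z τ) := by
  have hs := (summable_jacobiTheta₂_term_iff z τ).2 hτ
  have hs1 : Summable fun n : ℕ => jacobiTheta₂_term (n : ℤ) z τ :=
    hs.comp_injective (i := fun n : ℕ => (n : ℤ)) Nat.cast_injective
  have hinj : Function.Injective (fun n : ℕ => (-((n : ℤ) + 1))) := by
    intro a b h
    have h' : -((a : ℤ) + 1) = -((b : ℤ) + 1) := h
    omega
  have hs2 : Summable fun n : ℕ => jacobiTheta₂_term (-((n : ℤ) + 1)) z τ :=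
    hs.comp_injective hinj
  rw [jacobiTheta₂, hs1.tsum_add hs2]
  exact tsum_of_nat_of_neg_add_one (f := fun n : ℤ => jacobiTheta₂_term n z τ) hs1 hs2

lemma theta1_eq_jacobi (v τ : ℂ) (hτ : 0 < τ.im) : theta1 v τ =
    Complex.exp (π * Complex.I * τ / 4 + π * Complex.I * (v - 1 / 2)) *
      jacobiTheta₂ (v - 1 / 2 + τ / 2) τ := by
  rw [theta1_aux_split _ _ hτ, ← tsum_mul_left, theta1,
    ← tsum_mul_left]
  refine tsum_congr fun n => ?_
  have hsin : (-1 : ℂ) ^ n * Complex.sin ((2 * (n : ℂ) + 1) * π * v) =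
      Complex.cos ((2 * (n : ℂ) + 1) * π * (v - 1 / 2)) := by
    have e : (2 * (n : ℂ) + 1) * π * (v - 1 / 2) =
      ((2 * (n : ℂ) + 1) * π * v - π / 2) - n * π := by ring
    rw [e, Complex.cos_antiperiodic.sub_nat_mul_eq, Complex.cos_sub_pi_div_two]
  have e1 : 2 * ((-1 : ℂ) ^ n * Complex.exp (π * Complex.I * τ * ((n : ℂ) + 1 / 2) ^ 2) *
      Complex.sin ((2 * (n : ℂ) + 1) * π * v)) =
      Complex.exp (π * Complex.I * τ * ((n : ℂ) + 1 / 2) ^ 2) *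
      (2 * Complex.cos ((2 * (n : ℂ) + 1) * π * (v - 1 / 2))) := by rw [← hsin]; ring
  rw [e1, Complex.two_cos, mul_add, mul_add, jacobiTheta₂_term, jacobiTheta₂_term,
    ← Complex.exp_add, ← Complex.exp_add, ← Complex.exp_add, ← Complex.exp_add]
  push_cast
  congr 2 <;> ring

lemma theta1_modular (κ : ℝ) (hκ : 0 < κ) (v : ℝ) : ∃ C : ℝ, 0 < C ∧
    theta1 (v : ℂ) (Complex.I * κ) = ((C * ∑' k : ℕ, (-1 : ℝ) ^ k *
      (Real.exp (-(π / κ) * (k + (v - 1 / 2)) ^ 2) -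
        Real.exp (-(π / κ) * (k + 1 - (v - 1 / 2)) ^ 2)) : ℝ) : ℂ) := by
  have hκ' : (κ : ℂ) ≠ 0 := by exact_mod_cast hκ.ne'
  refine ⟨1 / κ ^ (1 / 2 : ℝ), by positivity, ?_⟩
  rw [theta1_eq_jacobi _ _ (by simpa using hκ), jacobiTheta₂_functional_equation,
    ← jacobiTheta₂_neg_left]
  have ht : -1 / (Complex.I * κ) = Complex.I / κ := by
    field_simp
    simp
  have hz : -(((v : ℂ) - 1 / 2 + Complex.I * κ / 2) / (Complex.I * κ)) =
      -1 / 2 + Complex.I * (v - 1 / 2) / κ := by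
    field_simp
    linear_combination (-(2 * (v : ℂ) - 1)) * Complex.I_sq
  have hpow : (-Complex.I * (Complex.I * κ)) ^ (1 / 2 : ℂ) = ((κ ^ (1 / 2 : ℝ) : ℝ) : ℂ) := by
    rw [Complex.ofReal_cpow hκ.le]
    congr 1
    · linear_combination (-(κ : ℂ)) * Complex.I_mul_I
    · norm_num
  rw [ht, hz, hpow]
  have him : 0 < (Complex.I / (κ : ℂ)).im := by
    rw [Complex.div_ofReal_im]; simpa using hκ
  rw [theta1_aux_split _ _ him]
  push_cast
  rw [mul_assoc (1 / _), mul_left_comm]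
  congr 1
  rw [← tsum_mul_left, ← tsum_mul_left]
  refine tsum_congr fun n => ?_
  have hI2 : Complex.I ^ 2 = -1 := Complex.I_sq
  have hpre : Complex.exp (π * Complex.I * (Complex.I * κ) / 4 + π * Complex.I * (v - 1 / 2)) *
      Complex.exp (-π * Complex.I * ((v : ℂ) - 1 / 2 + Complex.I * κ / 2) ^ 2 / (Complex.I * κ)) =
      Complex.exp (-(π / κ) * (v - 1 / 2) ^ 2) := by
    rw [← Complex.exp_add]
    congr 1
    field_simp
    ring_nf
  rw [← mul_assoc, hpre]
  have hm : ∀ m : ℕ, (-1 : ℂ) ^ m = Complex.exp (-(m * (π * Complex.I))) := by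
    intro m
    rw [Complex.exp_neg, Complex.exp_nat_mul, Complex.exp_pi_mul_I, ← inv_pow]
    norm_num
  have hm' : ∀ m : ℕ, -(-1 : ℂ) ^ m = Complex.exp (((m + 1 : ℕ) : ℂ) * (π * Complex.I)) := by
    intro m
    rw [Complex.exp_nat_mul, Complex.exp_pi_mul_I]
    ring
  have hsub : ∀ b c : ℂ, (-1 : ℂ) ^ n * (b - c) = (-1 : ℂ) ^ n * b + (-(-1 : ℂ) ^ n) * c := by
    intro b c; ring
  rw [hsub, hm', hm, mul_add, jacobiTheta₂_term, jacobiTheta₂_term,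
    ← Complex.exp_add, ← Complex.exp_add, ← Complex.exp_add, ← Complex.exp_add]
  push_cast
  congr 2
  · field_simp
    ring_nf
    simp only [hI2]
    ring
  · field_simp
    ring_nf
    simp only [hI2]
    ring

lemma theta1_pos_small (κ : ℝ) (hκ : 0 < κ) (hκ1 : κ ≤ 1) (v : ℝ) (h0 : 1 / 2 ≤ v) (h1 : v < 1) :
    ∃ c : ℝ, 0 < c ∧ theta1 (v : ℂ) (Complex.I * κ) = (c : ℂ) := by
  obtain ⟨C, hC, h⟩ := theta1_modular κ hκ v
  refine ⟨_, mul_pos hC ?_, h⟩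
  have hA : π ≤ π / κ := by rw [le_div_iff₀ hκ]; nlinarith [Real.pi_pos]
  generalize π / κ = A at hA
  have hA0 : 0 < A := Real.pi_pos.trans_le hA
  obtain ⟨w, hw⟩ : ∃ w, w = v - 1 / 2 := ⟨_, rfl⟩
  rw [← hw]
  have hw0 : 0 ≤ w := by linarith
  have hw1 : 2 * w < 1 := by linarith
  obtain ⟨x, hx⟩ : ∃ x, x = Real.exp (-A * (1 - 2 * w)) := ⟨_, rfl⟩
  have hx0 : 0 < x := hx ▸ Real.exp_pos _
  have hx1 : x < 1 := by
    rw [hx, Real.exp_lt_one_iff]; nlinarith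
  have hb : ∀ k : ℕ, Real.exp (-A * (k + w) ^ 2) - Real.exp (-A * (k + 1 - w) ^ 2) =
      Real.exp (-A * (k + w) ^ 2) * (1 - x ^ (2 * k + 1)) := by
    intro k
    rw [hx, ← Real.exp_nat_mul, mul_sub, mul_one, ← Real.exp_add]
    congr 2
    push_cast; ring
  simp only [hb]
  refine (theta1_aux_pos _ ?_ fun k => ?_).2
  · simp only [pow_zero, one_mul, mul_zero, zero_add, pow_one]
    exact mul_pos (Real.exp_pos _) (by linarith)
  · have hxk : 0 ≤ 1 - x ^ (2 * k + 1) := sub_nonneg.2 (pow_le_one₀ hx0.le hx1.le)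
    simp only [pow_zero, one_mul, mul_zero, zero_add, pow_one, Nat.cast_zero]
    rw [abs_mul, abs_pow, abs_neg, abs_one, one_pow, one_mul,
      abs_of_nonneg (mul_nonneg (Real.exp_pos _).le hxk)]
    have he : Real.exp (-A * (k + w) ^ 2) ≤ Real.exp (-A * k) * Real.exp (-A * w ^ 2) := by
      rw [← Real.exp_add, Real.exp_le_exp]
      have hk : (k : ℝ) ≤ (k : ℝ) ^ 2 := by
        exact_mod_cast Nat.le_self_pow two_ne_zero k
      have : 0 ≤ (k : ℝ) * w := by positivity
      nlinarith
    have hx1' : 0 ≤ 1 - x := by linarith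
    calc _ ≤ (Real.exp (-A * k) * Real.exp (-A * w ^ 2)) * ((2 * k + 1) * (1 - x)) :=
          mul_le_mul he (theta1_aux_geom x hx0.le hx1.le k) hxk (by positivity)
      _ = ((2 * k + 1) * Real.exp (-A * k)) * (Real.exp (-A * w ^ 2) * (1 - x)) := by ring
      _ ≤ _ := mul_le_mul_of_nonneg_right (theta1_aux_decay A hA k) (by positivity)

lemma theta1_pos_all (κ : ℝ) (hκ : 0 < κ) (v : ℝ) (h0 : 0 < v) (h1 : v < 1) :
    ∃ c : ℝ, 0 < c ∧ theta1 (v : ℂ) (Complex.I * κ) = (c : ℂ) := by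
  rcases le_total 1 κ with h | h
  · exact theta1_pos_large κ h v h0 h1
  · rcases le_total (1 / 2) v with hv | hv
    · exact theta1_pos_small κ hκ h v hv h1
    · obtain ⟨c, hc, e⟩ := theta1_pos_small κ hκ h (1 - v) (by linarith) (by linarith)
      refine ⟨c, hc, ?_⟩
      rw [← e, Complex.ofReal_sub, Complex.ofReal_one, theta1_one_sub]

/-- For every `κ > 0`, `ϑ₁(v; iκ)` is a positive real number for real `0 < v < 1`
and a negative real number for real `−1 < v < 0`. -/
theorem theta1_sign (κ : ℝ) (hκ : 0 < κ) (v : ℝ) :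
    (0 < v → v < 1 → ∃ c : ℝ, 0 < c ∧ theta1 (v : ℂ) (Complex.I * κ) = (c : ℂ)) ∧
    (-1 < v → v < 0 → ∃ c : ℝ, c < 0 ∧ theta1 (v : ℂ) (Complex.I * κ) = (c : ℂ)) := by
  refine ⟨theta1_pos_all κ hκ v, fun h1 h0 => ?_⟩
  obtain ⟨c, hc, e⟩ := theta1_pos_all κ hκ (-v) (by linarith) (by linarith)
  refine ⟨-c, by linarith, ?_⟩
  rw [Complex.ofReal_neg, theta1_neg] at e
  rw [Complex.ofReal_neg, ← e, neg_neg]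
end

section
/- Let (s,v) ∈ Λ̄₂ and let (T_j) be a sequence of positive integers tending to infinity and (t_j, x_j) ∈ Λ_{2T_j} be lattice points with t_j/T_j → s and x_j/T_j → v as j → ∞. Then −(1/T_j)·log P̃_{2T_j}(t_j, x_j) converges to I(s,v) as j → ∞, where I(s,v) = 3∫_0^{(1−s−v)/6} log[sin(π(φ+1/6))/sin(π(1/6−φ))] dφ + 6∫_0^{(1−s+v)/6} log[sin(π(φ+1/6))/sin(π(1/6−φ))] dφ + 6∫_0^{(1−s)/3} log[cos(π(φ+1/6))/cos(π(1/6−φ))] dφ. In other words, the large deviation principle holds for the simplified trigonometric excursion process with rate function I. -/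
open scoped Real
open Filter

/-- The spatio-temporal region `Λ_{2T}` of the excursion process. -/
def LambdaSet (T : ℕ) : Set (ℤ × ℤ) :=
  {p | Even (p.1 + p.2) ∧
    ((0 ≤ p.1 ∧ p.1 ≤ (T : ℤ) ∧ -p.1 ≤ p.2 ∧ p.2 ≤ p.1) ∨
     ((T : ℤ) + 1 ≤ p.1 ∧ p.1 ≤ 2 * (T : ℤ) ∧ p.1 - 2 * (T : ℤ) ≤ p.2 ∧
       p.2 ≤ 2 * (T : ℤ) - p.1))}

/-- The normalization constant `c̃₂(t;T)`. -/
noncomputable def ctilde2 (T : ℕ) (t : ℤ) : ℝ :=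
  ((∏ n ∈ Finset.Icc (1 : ℤ) t, Real.sin ((n : ℝ) * π / (3 * T))) *
      (∏ n ∈ Finset.Icc (1 : ℤ) (2 * (T : ℤ) - t), Real.sin ((n : ℝ) * π / (3 * T))) /
      ∏ n ∈ Finset.Icc (1 : ℤ) (2 * (T : ℤ)), Real.sin ((n : ℝ) * π / (3 * T))) *
    ∏ n ∈ Finset.Icc (1 : ℤ) (T : ℤ),
      Real.sin ((n : ℝ) * π / (3 * T)) ^ 2 / Real.cos ((2 * (n : ℝ) - (T : ℝ) - 1) * π / (6 * T))

open Classical in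
/-- The single-time distribution `P̃_{2T}(t,x)` of the simplified trigonometric
excursion process at the special parameters `πr = 3T`, `α₀/r = π/2`. -/
noncomputable def Ptilde (T : ℕ) (t x : ℤ) : ℝ :=
  if (t, x) ∈ LambdaSet T then
    ctilde2 T t *
      (∏ n ∈ Finset.Icc (1 : ℤ) ((t + x) / 2),
        Real.cos ((2 * (n : ℝ) + 3 * (T : ℝ) - 2 * (t : ℝ) - 1) * π / (6 * T)) /
          Real.sin ((n : ℝ) * π / (3 * T))) *
      (∏ n ∈ Finset.Icc (1 : ℤ) ((t - x) / 2), 1 / Real.sin ((n : ℝ) * π / (3 * T))) *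
      (∏ n ∈ Finset.Icc (1 : ℤ) ((2 * (T : ℤ) - t - x) / 2),
        Real.cos ((2 * (n : ℝ) + 2 * (t : ℝ) - (T : ℝ) - 1) * π / (6 * T)) /
          Real.sin ((n : ℝ) * π / (3 * T))) *
      (∏ n ∈ Finset.Icc (1 : ℤ) ((2 * (T : ℤ) - t + x) / 2),
        1 / Real.sin ((n : ℝ) * π / (3 * T)))
  else 0

/-- The scaled region `Λ̄₂`. -/
def LambdaBar2 : Set (ℝ × ℝ) :=
  {p | (0 ≤ p.1 ∧ p.1 ≤ 1 ∧ -p.1 ≤ p.2 ∧ p.2 ≤ p.1) ∨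
       (1 < p.1 ∧ p.1 ≤ 2 ∧ -(2 - p.1) ≤ p.2 ∧ p.2 ≤ 2 - p.1)}

/-- The rate function `I(s,v)` in its integral representation. -/
noncomputable def rateI (s v : ℝ) : ℝ :=
  3 * (∫ φ in (0 : ℝ)..((1 - s - v) / 6),
        Real.log (Real.sin (π * (φ + 1 / 6)) / Real.sin (π * (1 / 6 - φ)))) +
  6 * (∫ φ in (0 : ℝ)..((1 - s + v) / 6),
        Real.log (Real.sin (π * (φ + 1 / 6)) / Real.sin (π * (1 / 6 - φ)))) +
  6 * (∫ φ in (0 : ℝ)..((1 - s) / 3),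
        Real.log (Real.cos (π * (φ + 1 / 6)) / Real.cos (π * (1 / 6 - φ))))

/-- The basic integrand `log sin (π u / 3)`. -/
noncomputable def LS (u : ℝ) : ℝ := Real.log (Real.sin (π / 3 * u))

/-- Its primitive. -/
noncomputable def SS (a : ℝ) : ℝ := ∫ u in (0 : ℝ)..a, LS u

lemma LS_intervalIntegrable (a b : ℝ) : IntervalIntegrable LS MeasureTheory.volume a b := by
  have h := (intervalIntegrable_log_sin (a := π / 3 * a) (b := π / 3 * b)).comp_mul_left
    (c := π / 3)
  have hpi : (π / 3) ≠ 0 := by positivity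
  rw [mul_div_cancel_left₀ _ hpi, mul_div_cancel_left₀ _ hpi] at h
  exact h

lemma integral_LS (a b : ℝ) : ∫ u in a..b, LS u = SS b - SS a := by
  unfold SS
  rw [intervalIntegral.integral_interval_sub_left] <;> exact LS_intervalIntegrable _ _

lemma LS_symm (u : ℝ) : LS (3 - u) = LS u := by
  unfold LS
  rw [show π / 3 * (3 - u) = π - π / 3 * u by ring, Real.sin_pi_sub]

lemma sin_pos_of (u : ℝ) (h0 : 0 < u) (h3 : u < 3) : 0 < Real.sin (π / 3 * u) := by
  apply Real.sin_pos_of_pos_of_lt_pi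
  · positivity
  · nlinarith [Real.pi_pos]

lemma integral_LS_aff (c d p q : ℝ) (hc : c ≠ 0) :
    ∫ u in p..q, LS (c * u + d) = c⁻¹ * (SS (c * q + d) - SS (c * p + d)) := by
  rw [intervalIntegral.integral_comp_mul_add (fun u => LS u) hc d, integral_LS, smul_eq_mul]

lemma LS_aff_integrable (c d p q : ℝ) (hc : c ≠ 0) :
    IntervalIntegrable (fun u => LS (c * u + d)) MeasureTheory.volume p q := by
  have h := ((LS_intervalIntegrable (c * p + d) (c * q + d)).comp_add_right d).comp_mul_left
    (c := c)
  have e1 : (c * p + d - d) / c = p := by field_simp; ring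
  have e2 : (c * q + d - d) / c = q := by field_simp; ring
  rw [e1, e2] at h
  exact h

lemma SS_half : SS (3 / 2) = -(3 / 2) * Real.log 2 := by
  unfold SS LS
  rw [intervalIntegral.integral_comp_mul_left (fun u => Real.log (Real.sin u)) (by positivity)]
  rw [mul_zero, show π / 3 * (3 / 2) = π / 2 by ring, integral_log_sin_zero_pi_div_two]
  rw [smul_eq_mul]
  field_simp

lemma SS_dup (a : ℝ) (h0 : 0 ≤ a) (h1 : a ≤ 1) :
    SS (2 * a) = 2 * a * Real.log 2 + 2 * SS a + 2 * SS (3 / 2) - 2 * SS (3 / 2 - a) := by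
  have h : ∫ u in (0 : ℝ)..a, LS (2 * u + 0)
      = ∫ u in (0 : ℝ)..a, ((Real.log 2 + LS u) + LS ((-1) * u + 3 / 2)) := by
    apply intervalIntegral.integral_congr_Ioo_of_le h0
    intro u hu
    have p1 := sin_pos_of u hu.1 (by linarith [hu.2])
    have p2 := sin_pos_of ((-1) * u + 3 / 2) (by linarith [hu.2]) (by linarith [hu.1])
    simp only [LS]
    rw [show π / 3 * (2 * u + 0) = 2 * (π / 3 * u) by ring, Real.sin_two_mul,
      ← Real.sin_pi_div_two_sub,
      show π / 2 - π / 3 * u = π / 3 * ((-1) * u + 3 / 2) by ring,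
      Real.log_mul (by positivity) p2.ne', Real.log_mul (by norm_num) p1.ne']
  rw [integral_LS_aff _ _ _ _ (by norm_num), intervalIntegral.integral_add
    (intervalIntegrable_const.add (LS_intervalIntegrable _ _))
    (LS_aff_integrable _ _ _ _ (by norm_num)), intervalIntegral.integral_add
    intervalIntegrable_const (LS_intervalIntegrable _ _), integral_LS_aff _ _ _ _ (by norm_num),
    integral_LS, intervalIntegral.integral_const] at h
  have z : SS 0 = 0 := by simp [SS]
  simp only [add_zero, mul_zero, z, zero_add, smul_eq_mul] at h
  rw [show (-1 : ℝ) * a + 3 / 2 = 3 / 2 - a by ring] at h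
  linarith

lemma SS_rel : 7 * SS 1 - 2 * SS 2 - 6 * SS (1 / 2) = 0 := by
  have h1 := SS_dup (1 / 2) (by norm_num) (by norm_num)
  have h2 := SS_dup 1 (by norm_num) (by norm_num)
  have h3 := SS_half
  norm_num at h1 h2 h3 ⊢
  linarith

lemma integral_rate_one (c : ℝ) (h0 : -(1 / 6) ≤ c) (h1 : c ≤ 1 / 6) :
    ∫ φ in (0 : ℝ)..c, Real.log (Real.sin (π * (φ + 1 / 6)) / Real.sin (π * (1 / 6 - φ)))
      = (1 / 3) * (SS (1 / 2 + 3 * c) + SS (1 / 2 - 3 * c) - 2 * SS (1 / 2)) := by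
  have h : ∫ φ in (0 : ℝ)..c,
      Real.log (Real.sin (π * (φ + 1 / 6)) / Real.sin (π * (1 / 6 - φ)))
      = ∫ φ in (0 : ℝ)..c, (LS (3 * φ + 1 / 2) - LS ((-3) * φ + 1 / 2)) := by
    apply intervalIntegral.integral_congr_uIoo
    intro u hu
    have hu1 : -(1 / 6) < u := lt_of_le_of_lt (le_min (by norm_num) h0) hu.1
    have hu2 : u < 1 / 6 := lt_of_lt_of_le hu.2 (max_le (by norm_num) h1)
    have p1 := sin_pos_of (3 * u + 1 / 2) (by linarith) (by linarith)
    have p2 := sin_pos_of ((-3) * u + 1 / 2) (by linarith) (by linarith)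
    simp only [LS]
    rw [← Real.log_div p1.ne' p2.ne']
    ring_nf
  rw [h, intervalIntegral.integral_sub (LS_aff_integrable _ _ _ _ (by norm_num))
    (LS_aff_integrable _ _ _ _ (by norm_num)), integral_LS_aff _ _ _ _ (by norm_num),
    integral_LS_aff _ _ _ _ (by norm_num)]
  rw [show (-3 : ℝ) * c + 1 / 2 = 1 / 2 - 3 * c by ring,
    show (3 : ℝ) * c + 1 / 2 = 1 / 2 + 3 * c by ring]
  simp only [mul_zero, zero_add]
  ring

lemma integral_rate_two (c : ℝ) (h0 : -(1 / 3) ≤ c) (h1 : c ≤ 1 / 3) :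
    ∫ φ in (0 : ℝ)..c, Real.log (Real.cos (π * (φ + 1 / 6)) / Real.cos (π * (1 / 6 - φ)))
      = (1 / 3) * (2 * SS 1 - SS (1 - 3 * c) - SS (1 + 3 * c)) := by
  have h : ∫ φ in (0 : ℝ)..c,
      Real.log (Real.cos (π * (φ + 1 / 6)) / Real.cos (π * (1 / 6 - φ)))
      = ∫ φ in (0 : ℝ)..c, (LS ((-3) * φ + 1) - LS (3 * φ + 1)) := by
    apply intervalIntegral.integral_congr_uIoo
    intro u hu
    have hu1 : -(1 / 3) < u := lt_of_le_of_lt (le_min (by norm_num) h0) hu.1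
    have hu2 : u < 1 / 3 := lt_of_lt_of_le hu.2 (max_le (by norm_num) h1)
    have p1 := sin_pos_of (3 * u + 1) (by linarith) (by linarith)
    have p2 := sin_pos_of ((-3) * u + 1) (by linarith) (by linarith)
    simp only [LS]
    rw [← Real.log_div p2.ne' p1.ne', ← Real.sin_pi_div_two_sub,
      ← Real.sin_pi_div_two_sub (π * (1 / 6 - u))]
    ring_nf
  rw [h, intervalIntegral.integral_sub (LS_aff_integrable _ _ _ _ (by norm_num))
    (LS_aff_integrable _ _ _ _ (by norm_num)), integral_LS_aff _ _ _ _ (by norm_num),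
    integral_LS_aff _ _ _ _ (by norm_num)]
  rw [show (-3 : ℝ) * c + 1 = 1 - 3 * c by ring,
    show (3 : ℝ) * c + 1 = 1 + 3 * c by ring]
  simp only [mul_zero, zero_add]
  ring

lemma rateI_eq (s v : ℝ) (hsv : (s, v) ∈ LambdaBar2) :
    rateI s v = -(2 * SS s + 2 * SS (2 - s) - 2 * SS 2 + 3 * SS 1 - 2 * SS ((s - v) / 2)
      - SS ((s + v) / 2) - 2 * SS ((2 - s + v) / 2) - SS ((2 - s - v) / 2)) := by
  have hb : 0 ≤ s + v ∧ s + v ≤ 2 ∧ 0 ≤ s - v ∧ s - v ≤ 2 ∧ 0 ≤ s ∧ s ≤ 2 := by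
    rcases hsv with ⟨h1, h2, h3, h4⟩ | ⟨h1, h2, h3, h4⟩ <;> simp only at h1 h2 h3 h4 <;>
    refine ⟨?_, ?_, ?_, ?_, ?_, ?_⟩ <;> linarith
  obtain ⟨h1, h2, h3, h4, h5, h6⟩ := hb
  unfold rateI
  rw [integral_rate_one _ (by linarith) (by linarith), integral_rate_one _ (by linarith) (by linarith),
    integral_rate_two _ (by linarith) (by linarith)]
  have r := SS_rel
  rw [show 1 / 2 + 3 * ((1 - s - v) / 6) = (2 - s - v) / 2 by ring,
    show 1 / 2 - 3 * ((1 - s - v) / 6) = (s + v) / 2 by ring,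
    show 1 / 2 + 3 * ((1 - s + v) / 6) = (2 - s + v) / 2 by ring,
    show 1 / 2 - 3 * ((1 - s + v) / 6) = (s - v) / 2 by ring,
    show 1 - 3 * ((1 - s) / 3) = s by ring,
    show 1 + 3 * ((1 - s) / 3) = 2 - s by ring]
  linarith

lemma sin_lower (w : ℝ) (h0 : 0 ≤ w) (h2 : w ≤ 2) : w / 4 ≤ Real.sin (π / 3 * w) := by
  have hp := Real.pi_gt_three
  have hp4 := Real.pi_lt_four
  rcases le_total w (3 / 2) with h | h
  · have := Real.mul_le_sin (x := π / 3 * w) (by positivity) (by nlinarith)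
    have e : 2 / π * (π / 3 * w) = 2 / 3 * w := by field_simp
    rw [e] at this
    linarith
  · have := Real.mul_le_sin (x := π - π / 3 * w) (by nlinarith) (by nlinarith)
    have e : 2 / π * (π - π / 3 * w) = 2 - 2 / 3 * w := by field_simp
    rw [e, Real.sin_pi_sub] at this
    linarith

lemma LS_bound (u w : ℝ) (h0 : 0 < u) (huw : u / 2 ≤ w) (h2 : w ≤ 2) :
    |LS w| ≤ -Real.log (1 / 8 * u) := by
  have h := sin_lower w (by linarith) h2
  have h1 : 1 / 8 * u ≤ Real.sin (π / 3 * w) := by linarith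
  have hl := Real.log_le_log (by positivity) h1
  have hn : LS w ≤ 0 := Real.log_nonpos (by linarith) (Real.sin_le_one _)
  rw [abs_of_nonpos hn]
  unfold LS at *
  linarith

lemma floor_integral (G : ℕ → ℝ) (m : ℕ) :
    ∫ y in (0 : ℝ)..m, G ⌊y⌋₊ = ∑ n ∈ Finset.range m, G n := by
  have key : ∀ k : ℕ, Set.EqOn (fun _ : ℝ => G k) (fun y : ℝ => G ⌊y⌋₊)
      (Set.uIoo (k : ℝ) ((k + 1 : ℕ) : ℝ)) := by
    intro k y hy
    rw [Set.uIoo_of_le (by push_cast; linarith)] at hy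
    have : ⌊y⌋₊ = k := by
      rw [Nat.floor_eq_iff (le_trans (Nat.cast_nonneg k) hy.1.le)]
      exact ⟨hy.1.le, by have := hy.2; push_cast at this; exact this⟩
    simp [this]
  have h := intervalIntegral.sum_integral_adjacent_intervals (f := fun y : ℝ => G ⌊y⌋₊)
    (μ := MeasureTheory.volume) (a := fun k : ℕ => (k : ℝ)) (n := m) (by
      intro k _
      exact (intervalIntegrable_const (c := G k)).congr_uIoo (key k))
  simp only [Nat.cast_zero] at h
  rw [← h]
  apply Finset.sum_congr rfl
  intro k _
  rw [← intervalIntegral.integral_congr_uIoo (key k)]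
  simp

lemma riemann (a θ : ℝ) (hθ : 1 / 2 ≤ θ) (hθ1 : θ ≤ 1) (T m : ℕ → ℕ) (hTpos : ∀ j, 0 < T j)
    (hT : Tendsto (fun j => (T j : ℝ)) atTop atTop) (hm : ∀ j, m j ≤ 2 * T j)
    (ha : Tendsto (fun j => (m j : ℝ) / (T j : ℝ)) atTop (nhds a)) :
    Tendsto (fun j => (1 / (T j : ℝ)) * ∑ n ∈ Finset.range (m j), LS ((n + θ) / T j))
      atTop (nhds (SS a)) := by
  have hTp : ∀ j, (0 : ℝ) < T j := fun j => by exact_mod_cast hTpos j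
  have hmT : ∀ j, (m j : ℝ) / T j ≤ 2 := fun j => by
    rw [div_le_iff₀ (hTp j)]; exact_mod_cast hm j
  have ha2 : a ≤ 2 := le_of_tendsto' ha hmT
  have ha0 : 0 ≤ a := ge_of_tendsto' ha (fun j => by positivity)
  have e1 : ∀ j, (1 / (T j : ℝ)) * ∑ n ∈ Finset.range (m j), LS ((n + θ) / T j)
      = ∫ u in (0 : ℝ)..2, {u : ℝ | u ≤ (m j : ℝ) / T j}.indicator
          (fun u => LS ((⌊(T j : ℝ) * u⌋₊ + θ) / T j)) u := by
    intro j
    rw [intervalIntegral.integral_indicator ⟨by positivity, hmT j⟩]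
    rw [intervalIntegral.integral_comp_mul_left (fun y => LS ((⌊y⌋₊ + θ) / T j)) (hTp j).ne',
      mul_zero, mul_div_cancel₀ _ (hTp j).ne',
      floor_integral (fun n => LS ((n + θ) / T j)), smul_eq_mul, one_div]
  have e2 : SS a = ∫ u in (0 : ℝ)..2, {u : ℝ | u ≤ a}.indicator LS u := by
    rw [intervalIntegral.integral_indicator ⟨ha0, ha2⟩]; rfl
  simp_rw [e1]
  rw [e2]
  have hLSm : Measurable LS := by unfold LS; fun_prop
  apply intervalIntegral.tendsto_integral_filter_of_dominated_convergence
    (fun u => -Real.log (1 / 8 * u))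
  · refine Eventually.of_forall fun j => Measurable.aestronglyMeasurable ?_
    apply Measurable.indicator _ measurableSet_Iic
    apply hLSm.comp
    fun_prop
  · refine Eventually.of_forall fun j => ?_
    have hne : ∀ᵐ u : ℝ, u ≠ (m j : ℝ) / T j := by
      simp [MeasureTheory.ae_iff]
    filter_upwards [hne] with u hu1 hu
    rw [Set.uIoc_of_le (by norm_num)] at hu
    have hu0 := hu.1
    by_cases h : u ≤ (m j : ℝ) / T j
    · rw [Set.indicator_of_mem (by exact h), Real.norm_eq_abs]
      have hlt : u < (m j : ℝ) / T j := lt_of_le_of_ne h hu1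
      have hf : (⌊(T j : ℝ) * u⌋₊ : ℝ) + 1 ≤ m j := by
        have : ⌊(T j : ℝ) * u⌋₊ < m j := by
          rw [Nat.floor_lt (by have := hTp j; positivity)]
          rw [lt_div_iff₀ (hTp j)] at hlt
          linarith
        exact_mod_cast this
      apply LS_bound u _ hu0
      · rw [le_div_iff₀ (hTp j)]
        have := Nat.lt_floor_add_one ((T j : ℝ) * u)
        have := Nat.cast_nonneg (α := ℝ) ⌊(T j : ℝ) * u⌋₊
        linarith
      · refine le_trans ?_ (hmT j)
        apply div_le_div_of_nonneg_right _ (hTp j).le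
        linarith
    · rw [Set.indicator_of_notMem (by exact h), norm_zero]
      have := Real.log_nonpos (x := 1 / 8 * u) (by linarith) (by linarith [hu.2])
      linarith
  · have h := (intervalIntegral.intervalIntegrable_log' (a := 1 / 8 * 0) (b := 1 / 8 * 2)).comp_mul_left
      (c := 1 / 8)
    rw [mul_div_cancel_left₀ _ (by norm_num), mul_div_cancel_left₀ _ (by norm_num)] at h
    exact h.neg
  · have hne : ∀ᵐ u : ℝ, u ≠ a := by simp [MeasureTheory.ae_iff]
    filter_upwards [hne] with u hua hu
    rw [Set.uIoc_of_le (by norm_num)] at hu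
    have hu0 := hu.1
    have hw : Tendsto (fun j => LS ((⌊(T j : ℝ) * u⌋₊ + θ) / T j)) atTop (nhds (LS u)) := by
      have hc : ContinuousAt LS u := by
        unfold LS
        apply ContinuousAt.log (by fun_prop)
        exact (sin_pos_of u hu0 (by linarith [hu.2])).ne'
      apply hc.tendsto.comp
      have hinv : Tendsto (fun j => (1 : ℝ) / T j) atTop (nhds 0) :=
        tendsto_const_nhds.div_atTop hT
      have l1 : Tendsto (fun j => u - 1 / (T j : ℝ)) atTop (nhds u) := by
        simpa using tendsto_const_nhds.sub hinv
      have l2 : Tendsto (fun j => u + 1 / (T j : ℝ)) atTop (nhds u) := by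
        simpa using tendsto_const_nhds.add hinv
      apply tendsto_of_tendsto_of_tendsto_of_le_of_le l1 l2
      · intro j
        have hj := hTp j
        have := Nat.lt_floor_add_one ((T j : ℝ) * u)
        simp only
        rw [le_div_iff₀ hj, sub_mul, one_div, inv_mul_cancel₀ hj.ne']
        linarith
      · intro j
        have hj := hTp j
        have := Nat.floor_le (a := (T j : ℝ) * u) (by positivity)
        simp only
        rw [div_le_iff₀ hj, add_mul, one_div, inv_mul_cancel₀ hj.ne']
        linarith
    rcases lt_or_gt_of_ne hua with h | h
    · rw [Set.indicator_of_mem (by exact h.le)]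
      apply hw.congr'
      filter_upwards [ha.eventually (lt_mem_nhds h)] with j hj
      rw [Set.indicator_of_mem (by exact hj.le)]
    · rw [Set.indicator_of_notMem (by simpa using h)]
      apply tendsto_const_nhds.congr'
      filter_upwards [ha.eventually (gt_mem_nhds h)] with j hj
      rw [Set.indicator_of_notMem (by simpa using hj)]

lemma prod_Icc_int (f : ℤ → ℝ) (m : ℕ) :
    ∏ n ∈ Finset.Icc (1 : ℤ) (m : ℤ), f n = ∏ i ∈ Finset.range m, f ((i : ℤ) + 1) := by
  symm
  apply Finset.prod_bij (fun (i : ℕ) _ => (i : ℤ) + 1)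
  · intro i hi; simp at hi ⊢; omega
  · intro i _ k _ h; simpa using h
  · intro b hb
    simp at hb
    exact ⟨(b - 1).toNat, by simp; omega, by omega⟩
  · intros; rfl

lemma prod_reflect (F : ℝ → ℝ) (b a : ℕ) :
    (∏ i ∈ Finset.range a, F ((a : ℝ) + b - (i + 1) + 1 / 2)) * ∏ i ∈ Finset.range b, F (i + 1 / 2)
      = ∏ i ∈ Finset.range (a + b), F (i + 1 / 2) := by
  induction a with
  | zero => simp
  | succ a ih =>
    rw [Finset.prod_range_succ', show a + 1 + b = (a + b) + 1 by ring, Finset.prod_range_succ,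
      ← ih]
    have : ∀ i ∈ Finset.range a, F (((a + 1 : ℕ) : ℝ) + b - (((i + 1 : ℕ) : ℝ) + 1) + 1 / 2)
        = F ((a : ℝ) + b - (i + 1) + 1 / 2) := by
      intro i _
      congr 1
      push_cast
      ring
    rw [Finset.prod_congr rfl this]
    have e : ((a + 1 : ℕ) : ℝ) + b - (((0 : ℕ) : ℝ) + 1) + 1 / 2 = ((a + b : ℕ) : ℝ) + 1 / 2 := by
      push_cast; ring
    rw [e]
    ring

/-- Integer-node product. -/
noncomputable def KP (T : ℕ) (θ : ℝ) (m : ℕ) : ℝ :=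
  ∏ i ∈ Finset.range m, Real.sin (π / 3 * ((i + θ) / T))

lemma KP_pos (T : ℕ) (hT : 0 < T) (θ : ℝ) (h0 : 0 < θ) (h1 : θ ≤ 1) (m : ℕ) (hm : m ≤ 2 * T) :
    0 < KP T θ m := by
  apply Finset.prod_pos
  intro i hi
  have hTp : (0 : ℝ) < T := by exact_mod_cast hT
  rw [Finset.mem_range] at hi
  have : (i : ℝ) + 1 ≤ 2 * T := by exact_mod_cast (by omega : i + 1 ≤ 2 * T)
  apply sin_pos_of
  · positivity
  · rw [div_lt_iff₀ hTp]; linarith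

lemma log_KP (T : ℕ) (hT : 0 < T) (θ : ℝ) (h0 : 0 < θ) (h1 : θ ≤ 1) (m : ℕ) (hm : m ≤ 2 * T) :
    Real.log (KP T θ m) = ∑ n ∈ Finset.range m, LS ((n + θ) / T) := by
  unfold KP LS
  apply Real.log_prod
  intro i hi
  have hTp : (0 : ℝ) < T := by exact_mod_cast hT
  rw [Finset.mem_range] at hi
  have : (i : ℝ) + 1 ≤ 2 * T := by exact_mod_cast (by omega : i + 1 ≤ 2 * T)
  apply ne_of_gt
  apply sin_pos_of
  · positivity
  · rw [div_lt_iff₀ hTp]; linarith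

lemma prod_sin (T m : ℕ) :
    ∏ n ∈ Finset.Icc (1 : ℤ) (m : ℤ), Real.sin ((n : ℝ) * π / (3 * T)) = KP T 1 m := by
  rw [prod_Icc_int]
  apply Finset.prod_congr rfl
  intro i _
  congr 1
  push_cast
  rw [mul_div_assoc', div_mul_eq_mul_div, div_div]
  ring

lemma log_Ptilde (T a b c d : ℕ) (hT : 0 < T) (h : a + b + c + d = 2 * T)
    (hmem : (((a + b : ℕ) : ℤ), (a : ℤ) - b) ∈ LambdaSet T) (hx : (a : ℤ) - b = d - c) :
    Real.log (Ptilde T ((a + b : ℕ) : ℤ) ((a : ℤ) - b)) =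
      Real.log (KP T 1 (a + b)) + Real.log (KP T 1 (c + d)) - Real.log (KP T 1 (2 * T))
      + 2 * Real.log (KP T 1 T) - Real.log (KP T (1 / 2) (2 * T)) + Real.log (KP T (1 / 2) T)
      + Real.log (KP T (1 / 2) (a + b)) - Real.log (KP T (1 / 2) b) - Real.log (KP T 1 a)
      - Real.log (KP T 1 b) + Real.log (KP T (1 / 2) (c + d)) - Real.log (KP T (1 / 2) d)
      - Real.log (KP T 1 c) - Real.log (KP T 1 d) := by
  have hTp : (0 : ℝ) < T := by exact_mod_cast hT
  have hR : (a : ℝ) + b + c + d = 2 * T := by exact_mod_cast h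
  have hxR : (a : ℝ) - b = d - c := by exact_mod_cast hx
  have i1 : (((a + b : ℕ) : ℤ) + ((a : ℤ) - b)) / 2 = (a : ℤ) := by push_cast; omega
  have i2 : (((a + b : ℕ) : ℤ) - ((a : ℤ) - b)) / 2 = (b : ℤ) := by push_cast; omega
  have i3 : (2 * (T : ℤ) - ((a + b : ℕ) : ℤ) - ((a : ℤ) - b)) / 2 = (c : ℤ) := by
    push_cast; omega
  have i4 : (2 * (T : ℤ) - ((a + b : ℕ) : ℤ) + ((a : ℤ) - b)) / 2 = (d : ℤ) := by
    push_cast; omega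
  have i5 : 2 * (T : ℤ) - ((a + b : ℕ) : ℤ) = ((c + d : ℕ) : ℤ) := by push_cast; omega
  have i6 : 2 * (T : ℤ) = ((2 * T : ℕ) : ℤ) := by push_cast; rfl
  -- positivity
  have P1 : ∀ m, m ≤ 2 * T → 0 < KP T 1 m := fun m hm => KP_pos T hT 1 one_pos le_rfl m hm
  have P2 : ∀ m, m ≤ 2 * T → 0 < KP T (1 / 2) m := fun m hm =>
    KP_pos T hT (1 / 2) (by norm_num) (by norm_num) m hm
  -- the cosine products
  have c1 : ∏ n ∈ Finset.Icc (1 : ℤ) (a : ℤ), Real.cos ((2 * (n : ℝ) + 3 * (T : ℝ)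
      - 2 * (((a + b : ℕ) : ℤ) : ℝ) - 1) * π / (6 * T)) = KP T (1 / 2) (a + b) / KP T (1 / 2) b := by
    rw [eq_div_iff (P2 b (by omega)).ne', prod_Icc_int]
    unfold KP
    rw [← prod_reflect (fun y => Real.sin (π / 3 * (y / T)))]
    congr 1
    apply Finset.prod_congr rfl
    intro i _
    rw [← Real.sin_pi_div_two_sub]
    congr 1
    push_cast
    field_simp
    ring
  have c2 : ∏ n ∈ Finset.Icc (1 : ℤ) (c : ℤ), Real.cos ((2 * (n : ℝ)
      + 2 * (((a + b : ℕ) : ℤ) : ℝ) - (T : ℝ) - 1) * π / (6 * T))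
      = KP T (1 / 2) (c + d) / KP T (1 / 2) d := by
    rw [eq_div_iff (P2 d (by omega)).ne', prod_Icc_int]
    unfold KP
    rw [← prod_reflect (fun y => Real.sin (π / 3 * (y / T)))]
    congr 1
    apply Finset.prod_congr rfl
    intro i _
    rw [← Real.cos_neg, ← Real.sin_pi_div_two_sub, ← Real.sin_pi_sub]
    congr 1
    have : (c : ℝ) + d = 2 * T - a - b := by linarith
    rw [this]
    push_cast
    field_simp
    ring
  have c3 : ∏ n ∈ Finset.Icc (1 : ℤ) (T : ℤ),
      Real.cos ((2 * (n : ℝ) - (T : ℝ) - 1) * π / (6 * T))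
      = KP T (1 / 2) (2 * T) / KP T (1 / 2) T := by
    rw [eq_div_iff (P2 T (by omega)).ne', prod_Icc_int]
    unfold KP
    rw [two_mul, ← prod_reflect (fun y => Real.sin (π / 3 * (y / T)))]
    congr 1
    apply Finset.prod_congr rfl
    intro i _
    rw [← Real.cos_neg, ← Real.sin_pi_div_two_sub, ← Real.sin_pi_sub]
    congr 1
    push_cast
    field_simp
    ring
  have n1 := P1 (a + b) (by omega)
  have n2 := P1 (c + d) (by omega)
  have n3 := P1 (2 * T) le_rfl
  have n4 := P1 T (by omega)
  have n5 := P2 (2 * T) le_rfl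
  have n6 := P2 T (by omega)
  have n7 := P2 (a + b) (by omega)
  have n8 := P2 b (by omega)
  have n9 := P1 a (by omega)
  have n10 := P1 b (by omega)
  have n11 := P2 (c + d) (by omega)
  have n12 := P2 d (by omega)
  have n13 := P1 c (by omega)
  have n14 := P1 d (by omega)
  have hP : Ptilde T ((a + b : ℕ) : ℤ) ((a : ℤ) - b) =
      ((KP T 1 (a + b) * KP T 1 (c + d) / KP T 1 (2 * T)) *
        (KP T 1 T ^ 2 / (KP T (1 / 2) (2 * T) / KP T (1 / 2) T))) *
      (KP T (1 / 2) (a + b) / KP T (1 / 2) b / KP T 1 a) * (1 / KP T 1 b) *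
      (KP T (1 / 2) (c + d) / KP T (1 / 2) d / KP T 1 c) * (1 / KP T 1 d) := by
    unfold Ptilde ctilde2
    rw [if_pos hmem, i1, i2, i3, i4, i5, i6]
    simp only [Finset.prod_div_distrib, Finset.prod_pow, Finset.prod_const_one]
    rw [c1, c2, c3]
    simp only [prod_sin]
  rw [hP]
  rw [Real.log_mul (by positivity) (by positivity), Real.log_mul (by positivity) (by positivity),
    Real.log_mul (by positivity) (by positivity), Real.log_mul (by positivity) (by positivity),
    Real.log_mul (by positivity) (by positivity),
    Real.log_div (by positivity) (by positivity), Real.log_mul (by positivity) (by positivity),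
    Real.log_div (by positivity) (by positivity), Real.log_pow,
    Real.log_div (by positivity) (by positivity),
    Real.log_div (by positivity) (by positivity), Real.log_div (by positivity) (by positivity),
    Real.log_div (by positivity) (by positivity), Real.log_one,
    Real.log_div (by positivity) (by positivity), Real.log_div (by positivity) (by positivity),
    Real.log_div (by positivity) (by positivity), Real.log_one]
  push_cast
  ring

/-- Lemma 7.1: the large deviation principle for the simplified trigonometric
excursion process, with rate function `I` given by the integral representation. -/
theorem simplified_trig_LDP (s v : ℝ) (hsv : (s, v) ∈ LambdaBar2)
    (T : ℕ → ℕ) (hTpos : ∀ j, 0 < T j)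
    (hT : Tendsto (fun j => (T j : ℝ)) atTop atTop)
    (t x : ℕ → ℤ) (hmem : ∀ j, (t j, x j) ∈ LambdaSet (T j))
    (ht : Tendsto (fun j => (t j : ℝ) / (T j : ℝ)) atTop (nhds s))
    (hx : Tendsto (fun j => (x j : ℝ) / (T j : ℝ)) atTop (nhds v)) :
    Tendsto (fun j => -(1 / (T j : ℝ)) * Real.log (Ptilde (T j) (t j) (x j)))
      atTop (nhds (rateI s v)) := by
  have hex : ∀ j, ∃ a b c d : ℕ, a + b + c + d = 2 * T j ∧ t j = ((a + b : ℕ) : ℤ) ∧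
      x j = (a : ℤ) - b ∧ x j = (d : ℤ) - c := by
    intro j
    obtain ⟨⟨k, hk⟩, h⟩ := hmem j
    simp only at hk h
    refine ⟨k.toNat, (k - x j).toNat, (T j - k).toNat, (T j - k + x j).toNat, ?_, ?_, ?_, ?_⟩ <;>
      omega
  choose a b c d h1 h2 h3 h4 using hex
  have hTp : ∀ j, (0 : ℝ) < T j := fun j => by exact_mod_cast hTpos j
  have r1 : ∀ j, (a j : ℝ) + b j + c j + d j = 2 * T j := fun j => by exact_mod_cast h1 j
  have r2 : ∀ j, (t j : ℝ) = a j + b j := fun j => by rw [h2 j]; push_cast; ring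
  have r3 : ∀ j, (x j : ℝ) = a j - b j := fun j => by rw [h3 j]; push_cast; ring
  have r4 : ∀ j, (x j : ℝ) = d j - c j := fun j => by rw [h4 j]; push_cast; ring
  have hTT : Tendsto (fun j => (T j : ℝ) / (T j : ℝ)) atTop (nhds 1) := by
    apply tendsto_const_nhds.congr
    intro j
    rw [div_self (hTp j).ne']
  have lT2 : Tendsto (fun j => ((2 * T j : ℕ) : ℝ) / (T j : ℝ)) atTop (nhds 2) := by
    apply tendsto_const_nhds.congr
    intro j
    have := hTp j
    push_cast
    field_simp
  have lab : Tendsto (fun j => ((a j + b j : ℕ) : ℝ) / (T j : ℝ)) atTop (nhds s) := by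
    apply ht.congr
    intro j
    rw [r2]; push_cast; rfl
  have lcd : Tendsto (fun j => ((c j + d j : ℕ) : ℝ) / (T j : ℝ)) atTop (nhds (2 - s)) := by
    apply (lT2.sub ht).congr
    intro j
    rw [← sub_div]; push_cast; congr 1; linarith [r1 j, r2 j]
  have la : Tendsto (fun j => (a j : ℝ) / (T j : ℝ)) atTop (nhds ((s + v) / 2)) := by
    apply ((ht.add hx).div_const 2).congr
    intro j
    rw [← add_div, div_right_comm]; congr 1; linarith [r2 j, r3 j]
  have lb : Tendsto (fun j => (b j : ℝ) / (T j : ℝ)) atTop (nhds ((s - v) / 2)) := by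
    apply ((ht.sub hx).div_const 2).congr
    intro j
    rw [← sub_div, div_right_comm]; congr 1; linarith [r2 j, r3 j]
  have lc : Tendsto (fun j => (c j : ℝ) / (T j : ℝ)) atTop (nhds ((2 - s - v) / 2)) := by
    apply (((lT2.sub ht).sub hx).div_const 2).congr
    intro j
    rw [← sub_div, ← sub_div, div_right_comm]; push_cast; congr 1
    linarith [r1 j, r2 j, r4 j]
  have ld : Tendsto (fun j => (d j : ℝ) / (T j : ℝ)) atTop (nhds ((2 - s + v) / 2)) := by
    apply (((lT2.sub ht).add hx).div_const 2).congr
    intro j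
    rw [← sub_div, ← add_div, div_right_comm]; push_cast; congr 1
    linarith [r1 j, r2 j, r4 j]
  have R : ∀ (θ : ℝ), 1 / 2 ≤ θ → θ ≤ 1 → ∀ (m : ℕ → ℕ) (q : ℝ), (∀ j, m j ≤ 2 * T j) →
      Tendsto (fun j => (m j : ℝ) / (T j : ℝ)) atTop (nhds q) →
      Tendsto (fun j => (1 / (T j : ℝ)) * Real.log (KP (T j) θ (m j))) atTop (nhds (SS q)) := by
    intro θ g0 g1 m q hm hq
    apply (riemann q θ g0 g1 T m hTpos hT hm hq).congr
    intro j
    rw [log_KP (T j) (hTpos j) θ (by linarith) g1 (m j) (hm j)]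
  have K := R 1 (by norm_num) le_rfl
  have H := R (1 / 2) le_rfl (by norm_num)
  have b1 : ∀ j, a j + b j ≤ 2 * T j := fun j => by have := h1 j; omega
  have b2 : ∀ j, c j + d j ≤ 2 * T j := fun j => by have := h1 j; omega
  have b3 : ∀ j, T j ≤ 2 * T j := fun j => by omega
  have ba : ∀ j, a j ≤ 2 * T j := fun j => by have := h1 j; omega
  have bb : ∀ j, b j ≤ 2 * T j := fun j => by have := h1 j; omega
  have bc : ∀ j, c j ≤ 2 * T j := fun j => by have := h1 j; omega
  have bd : ∀ j, d j ≤ 2 * T j := fun j => by have := h1 j; omega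
  have L := ((((((((((((((K (fun j => a j + b j) s b1 lab).add
    (K (fun j => c j + d j) (2 - s) b2 lcd)).sub
    (K (fun j => 2 * T j) 2 (fun _ => le_rfl) lT2)).add
    ((K T 1 b3 hTT).const_mul 2)).sub
    (H (fun j => 2 * T j) 2 (fun _ => le_rfl) lT2)).add
    (H T 1 b3 hTT)).add
    (H (fun j => a j + b j) s b1 lab)).sub
    (H b _ bb lb)).sub
    (K a _ ba la)).sub
    (K b _ bb lb)).add
    (H (fun j => c j + d j) (2 - s) b2 lcd)).sub
    (H d _ bd ld)).sub
    (K c _ bc lc)).sub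
    (K d _ bd ld)).neg
  rw [rateI_eq s v hsv]
  have L2 := L.congr (f₂ := fun j => -(1 / (T j : ℝ)) * Real.log (Ptilde (T j) (t j) (x j))) (by
    intro j
    have hm := hmem j
    have e4 := h4 j
    rw [h3 j] at e4
    rw [h2 j, h3 j] at hm ⊢
    rw [log_Ptilde (T j) (a j) (b j) (c j) (d j) (hTpos j) (h1 j) hm e4]
    ring)
  convert L2 using 2
  ring
end

section
/- Define ṽ(s) = (1/3)(s−1) − (16π²/729)(s−1)³. Then ṽ(1) = 0 and I(s, ṽ(s)) = O((s−1)⁸) as s → 1; that is, there exist C > 0 and δ > 0 such that |I(s, ṽ(s))| ≤ C|s−1|⁸ for all s with |s−1| < δ. Hence the scaled limit trajectory of the simplified trigonometric excursion process behaves near s = 1 as ṽ(s) = (1/3)(s−1) − (16π²/729)(s−1)³ + O((s−1)⁵). -/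
open scoped Real

/-- The approximate scaled limit trajectory `ṽ(s) = (s−1)/3 − (16π²/729)(s−1)³`. -/
noncomputable def vTilde (s : ℝ) : ℝ :=
  (1 / 3) * (s - 1) - (16 * π ^ 2 / 729) * (s - 1) ^ 3

open Filter Topology Asymptotics

lemma bigO_of_deriv {h h' : ℝ → ℝ} (n : ℕ) (h0 : h 0 = 0)
    (hd : ∀ᶠ x in 𝓝 (0 : ℝ), HasDerivAt h (h' x) x)
    (hO : h' =O[𝓝 0] fun x : ℝ => x ^ n) :
    h =O[𝓝 0] fun x : ℝ => x ^ (n + 1) := by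
  obtain ⟨C, hC, hb⟩ := hO.exists_pos
  obtain ⟨ε, hε, hball⟩ := Metric.eventually_nhds_iff.1 (hd.and hb.bound)
  refine IsBigO.of_bound C ?_
  refine Metric.eventually_nhds_iff.2 ⟨ε, hε, ?_⟩
  intro x hx
  have hx' : |x| < ε := by simpa [Real.dist_eq] using hx
  have key := (convex_closedBall (0 : ℝ) |x|).norm_image_sub_le_of_norm_hasDerivWithin_le
    (f := h) (f' := h') (C := C * |x| ^ n) (x := 0) (y := x) ?_ ?_ ?_ ?_
  · rw [h0, sub_zero, sub_zero] at key
    simp only [norm_pow]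
    rw [pow_succ, ← mul_assoc]
    simpa using key
  · intro y hy
    have hy' : |y| ≤ |x| := by simpa using hy
    exact (hball (y := y) (by simpa [Real.dist_eq] using hy'.trans_lt hx')).1.hasDerivWithinAt
  · intro y hy
    have hy' : |y| ≤ |x| := by simpa using hy
    have h2 := (hball (y := y) (by simpa [Real.dist_eq] using hy'.trans_lt hx')).2
    refine h2.trans ?_
    simp only [norm_pow, Real.norm_eq_abs]
    gcongr
  · simp
  · simp

lemma integral_deriv {f f' : ℝ → ℝ} (hd : ∀ᶠ x in 𝓝 (0 : ℝ), HasDerivAt f (f' x) x) :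
    ∀ᶠ x in 𝓝 (0 : ℝ), HasDerivAt (fun a => ∫ φ in (0 : ℝ)..a, f φ) (f x) x := by
  obtain ⟨ε, hε, hball⟩ := Metric.eventually_nhds_iff_ball.1 hd
  have hc : ContinuousOn f (Metric.ball 0 ε) := fun y hy =>
    (hball y hy).continuousAt.continuousWithinAt
  refine Metric.eventually_nhds_iff_ball.2 ⟨ε, hε, ?_⟩
  intro x hx
  refine intervalIntegral.integral_hasDerivAt_right ?_ ?_ (hball x hx).continuousAt
  · refine (hc.mono ?_).intervalIntegrable
    exact ((convex_ball (0 : ℝ) ε).ordConnected).uIcc_subset (Metric.mem_ball_self hε) hx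
  · exact hc.stronglyMeasurableAtFilter Metric.isOpen_ball x hx

lemma cos_bigO : (fun x : ℝ => Real.cos x - (1 - x ^ 2 / 2 + x ^ 4 / 24))
    =O[𝓝 0] fun x : ℝ => x ^ 6 := by
  have h0 : (fun x : ℝ => Real.cos x - (1 - x ^ 2 / 2)) =O[𝓝 0] fun x : ℝ => x ^ 4 := by
    refine IsBigO.of_bound (5 / 96) ?_
    refine Metric.eventually_nhds_iff.2 ⟨1, one_pos, ?_⟩
    intro x hx
    have hx' : |x| ≤ 1 := by
      have : |x| < 1 := by simpa [Real.dist_eq] using hx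
      exact this.le
    have := Real.cos_bound hx'
    simp only [norm_pow, Real.norm_eq_abs]
    linarith
  have h1 : (fun x : ℝ => Real.sin x - (x - x ^ 3 / 6)) =O[𝓝 0] fun x : ℝ => x ^ 5 := by
    refine bigO_of_deriv 4 (by simp) (Eventually.of_forall fun x => ?_) h0
    have := (Real.hasDerivAt_sin x).sub ((hasDerivAt_id x).sub ((hasDerivAt_pow 3 x).div_const 6))
    refine (this.congr_deriv ?_)
    norm_num
    ring
  refine bigO_of_deriv 5 (by simp) (Eventually.of_forall fun x => ?_) h1.neg_left
  have := (Real.hasDerivAt_cos x).sub (((hasDerivAt_const x (1:ℝ)).sub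
    ((hasDerivAt_pow 2 x).div_const 2)).add ((hasDerivAt_pow 4 x).div_const 24))
  refine (this.congr_deriv ?_)
  norm_num
  ring

/-- reciprocal expansion: `q` polynomial with `1 - q (2 cos u + e) = O(u^6)`. -/
lemma inv_bigO (e a b c : ℝ) (he : 2 + e ≠ 0) (h1 : a * (2 + e) = 1)
    (h2 : b * (2 + e) = a) (h3 : c * (2 + e) + a / 12 = b) :
    (fun u : ℝ => 1 / (2 * Real.cos u + e) - (a + b * u ^ 2 + c * u ^ 4))
      =O[𝓝 0] fun u : ℝ => u ^ 6 := by
  have hcont : ContinuousAt (fun u : ℝ => 2 * Real.cos u + e) 0 := by fun_prop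
  have hne : ∀ᶠ u in 𝓝 (0 : ℝ), 2 * Real.cos u + e ≠ 0 :=
    hcont.eventually_ne (by simpa using he)
  have hinv : (fun u : ℝ => 1 / (2 * Real.cos u + e)) =O[𝓝 0] fun _ : ℝ => (1 : ℝ) := by
    have : ContinuousAt (fun u : ℝ => 1 / (2 * Real.cos u + e)) 0 :=
      continuousAt_const.div hcont (by simpa using he)
    exact this.isBigO_one ℝ
  have hp : (fun u : ℝ => -2 * (a + b * u ^ 2 + c * u ^ 4)) =O[𝓝 0] fun _ : ℝ => (1 : ℝ) := by
    have : ContinuousAt (fun u : ℝ => -2 * (a + b * u ^ 2 + c * u ^ 4)) 0 := by fun_prop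
    exact this.isBigO_one ℝ
  have hr : (fun u : ℝ => (c - b / 12 - c * u ^ 2 / 12)) =O[𝓝 0] fun _ : ℝ => (1 : ℝ) := by
    have : ContinuousAt (fun u : ℝ => (c - b / 12 - c * u ^ 2 / 12)) 0 := by fun_prop
    exact this.isBigO_one ℝ
  have hr' : (fun u : ℝ => (c - b / 12 - c * u ^ 2 / 12) * u ^ 6) =O[𝓝 0]
      fun u : ℝ => 1 * u ^ 6 := hr.mul (isBigO_refl _ _)
  have hs : (fun u : ℝ => (-2 * (a + b * u ^ 2 + c * u ^ 4)) *
      (Real.cos u - (1 - u ^ 2 / 2 + u ^ 4 / 24)) + (c - b / 12 - c * u ^ 2 / 12) * u ^ 6)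
      =O[𝓝 0] fun u : ℝ => 1 * u ^ 6 := (hp.mul cos_bigO).add hr'
  refine ((hinv.mul hs).congr' ?_ (Eventually.of_forall fun u => by ring))
  filter_upwards [hne] with u hu
  field_simp
  linear_combination 288 * h1 + 288 * u ^ 2 * h2 + 288 * u ^ 4 * h3

lemma int_bigO (f : ℝ → ℝ) (e K a b c : ℝ) (he : 2 + e ≠ 0) (h1 : a * (2 + e) = 1)
    (h2 : b * (2 + e) = a) (h3 : c * (2 + e) + a / 12 = b) (h0 : f 0 = 0)
    (hd : ∀ᶠ x in 𝓝 (0 : ℝ), HasDerivAt f (K * (1 / (2 * Real.cos (2 * π * x) + e))) x) :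
    (fun x : ℝ => (∫ φ in (0 : ℝ)..x, f φ) -
      K * (a * x ^ 2 / 2 + b * (2 * π) ^ 2 * x ^ 4 / 12 + c * (2 * π) ^ 4 * x ^ 6 / 30))
      =O[𝓝 0] fun x : ℝ => x ^ 8 := by
  have ht : Tendsto (fun x : ℝ => 2 * π * x) (𝓝 0) (𝓝 0) := by
    have : ContinuousAt (fun x : ℝ => 2 * π * x) 0 := by fun_prop
    simpa [ContinuousAt] using this
  have hO := (inv_bigO e a b c he h1 h2 h3).comp_tendsto ht
  have hO2 : (fun x : ℝ => K * (1 / (2 * Real.cos (2 * π * x) + e) -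
      (a + b * (2 * π * x) ^ 2 + c * (2 * π * x) ^ 4))) =O[𝓝 0] fun x : ℝ => x ^ 6 := by
    refine IsBigO.const_mul_left (hO.trans ?_) K
    refine (isBigO_const_mul_self ((2 * π) ^ 6) (fun x : ℝ => x ^ 6) (𝓝 0)).congr_left ?_
    intro x
    simp only [Function.comp]
    ring
  have hf : (fun x : ℝ => f x - K * (a * x + b * (2 * π) ^ 2 * x ^ 3 / 3
      + c * (2 * π) ^ 4 * x ^ 5 / 5)) =O[𝓝 0] fun x : ℝ => x ^ 7 := by
    refine bigO_of_deriv 6 (by simp [h0]) ?_ hO2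
    filter_upwards [hd] with x hx
    have := hx.sub (((((hasDerivAt_id x).const_mul a).add
      (((hasDerivAt_pow 3 x).const_mul (b * (2 * π) ^ 2)).div_const 3)).add
      (((hasDerivAt_pow 5 x).const_mul (c * (2 * π) ^ 4)).div_const 5)).const_mul K)
    refine this.congr_deriv ?_
    norm_num
    ring
  refine bigO_of_deriv 7 (by simp) ?_ hf
  filter_upwards [integral_deriv hd] with x hx
  have := hx.sub ((((((hasDerivAt_pow 2 x).const_mul a).div_const 2).add
      (((hasDerivAt_pow 4 x).const_mul (b * (2 * π) ^ 2)).div_const 12)).add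
      (((hasDerivAt_pow 6 x).const_mul (c * (2 * π) ^ 4)).div_const 30)).const_mul K)
  refine this.congr_deriv ?_
  push_cast
  ring

lemma lin1 (x : ℝ) : HasDerivAt (fun φ : ℝ => π * (φ + 1 / 6)) π x := by
  simpa using ((hasDerivAt_id x).add_const (1 / 6 : ℝ)).const_mul π

lemma lin2 (x : ℝ) : HasDerivAt (fun φ : ℝ => π * (1 / 6 - φ)) (-π) x := by
  simpa using ((hasDerivAt_id x).const_sub (1 / 6 : ℝ)).const_mul π

lemma ev_ne (g : ℝ → ℝ) (hg : Continuous g) (h : g 0 ≠ 0) : ∀ᶠ x in 𝓝 (0 : ℝ), g x ≠ 0 :=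
  hg.continuousAt.eventually_ne h

lemma arg1 (x : ℝ) : π * (x + 1 / 6) = π * x + π / 6 := by ring
lemma arg2 (x : ℝ) : π * (1 / 6 - x) = π / 6 - π * x := by ring

lemma sin_deriv : ∀ᶠ x in 𝓝 (0 : ℝ), HasDerivAt
    (fun φ : ℝ => Real.log (Real.sin (π * (φ + 1 / 6)) / Real.sin (π * (1 / 6 - φ))))
    (2 * √3 * π * (1 / (2 * Real.cos (2 * π * x) + (-1)))) x := by
  have e1 := ev_ne (fun x => Real.sin (π * (x + 1 / 6))) (by fun_prop) (by
    simp only [arg1]; simp)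
  have e2 := ev_ne (fun x => Real.sin (π * (1 / 6 - x))) (by fun_prop) (by
    simp only [arg2]; simp)
  have e3 := ev_ne (fun x => 2 * Real.cos (2 * π * x) + (-1)) (by fun_prop) (by
    norm_num)
  filter_upwards [e1, e2, e3] with x h1 h2 h3
  have := (((lin1 x).sin).div ((lin2 x).sin) h2).log (div_ne_zero h1 h2)
  have hs : Real.sin (π * x) ^ 2 = 1 - Real.cos (π * x) ^ 2 := by
    rw [← Real.sin_sq_add_cos_sq (π * x)]; ring
  have h33 : √3 ^ 2 = 3 := by norm_num
  have hcc : Real.cos (2 * π * x) = 2 * Real.cos (π * x) ^ 2 - 1 := by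
    rw [show 2 * π * x = 2 * (π * x) by ring, Real.cos_two_mul]
  have hM : 2 * Real.cos (2 * π * x) + (-1) =
      4 * (Real.sin (π * (x + 1 / 6)) * Real.sin (π * (1 / 6 - x))) := by
    rw [hcc]
    rw [arg1, arg2]
    simp only [Real.sin_add, Real.sin_sub, Real.cos_add, Real.cos_sub, Real.cos_pi_div_six,
      Real.sin_pi_div_six]
    linear_combination Real.sin (π * x) ^ 2 * h33 + 3 * hs
  have hN : Real.cos (π * (x + 1 / 6)) * Real.sin (π * (1 / 6 - x)) +
      Real.sin (π * (x + 1 / 6)) * Real.cos (π * (1 / 6 - x)) = √3 / 2 := by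
    rw [arg1, arg2]
    simp only [Real.sin_add, Real.sin_sub, Real.cos_add, Real.cos_sub, Real.cos_pi_div_six,
      Real.sin_pi_div_six]
    linear_combination √3 / 2 * hs
  refine this.congr_deriv ?_
  rw [hM]
  rw [Pi.div_apply]
  clear hM hs hcc h3 this e1 e2 e3
  generalize Real.sin (π * (x + 1 / 6)) = s1 at *
  generalize Real.sin (π * (1 / 6 - x)) = s2 at *
  generalize Real.cos (π * (x + 1 / 6)) = c1 at *
  generalize Real.cos (π * (1 / 6 - x)) = c2 at *
  field_simp
  linear_combination 4 * hN

lemma cos_deriv : ∀ᶠ x in 𝓝 (0 : ℝ), HasDerivAt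
    (fun φ : ℝ => Real.log (Real.cos (π * (φ + 1 / 6)) / Real.cos (π * (1 / 6 - φ))))
    (-2 * √3 * π * (1 / (2 * Real.cos (2 * π * x) + 1))) x := by
  have e1 := ev_ne (fun x => Real.cos (π * (x + 1 / 6))) (by fun_prop) (by
    simp only [arg1]; simp)
  have e2 := ev_ne (fun x => Real.cos (π * (1 / 6 - x))) (by fun_prop) (by
    simp only [arg2]; simp)
  have e3 := ev_ne (fun x => 2 * Real.cos (2 * π * x) + 1) (by fun_prop) (by
    norm_num)
  filter_upwards [e1, e2, e3] with x h1 h2 h3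
  have := (((lin1 x).cos).div ((lin2 x).cos) h2).log (div_ne_zero h1 h2)
  have hs : Real.sin (π * x) ^ 2 = 1 - Real.cos (π * x) ^ 2 := by
    rw [← Real.sin_sq_add_cos_sq (π * x)]; ring
  have h33 : √3 ^ 2 = 3 := by norm_num
  have hcc : Real.cos (2 * π * x) = 2 * Real.cos (π * x) ^ 2 - 1 := by
    rw [show 2 * π * x = 2 * (π * x) by ring, Real.cos_two_mul]
  have hM : 2 * Real.cos (2 * π * x) + 1 =
      4 * (Real.cos (π * (x + 1 / 6)) * Real.cos (π * (1 / 6 - x))) := by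
    rw [hcc]
    rw [arg1, arg2]
    simp only [Real.sin_add, Real.sin_sub, Real.cos_add, Real.cos_sub, Real.cos_pi_div_six,
      Real.sin_pi_div_six]
    linear_combination (-Real.cos (π * x) ^ 2) * h33 + hs
  have hN : Real.sin (π * (x + 1 / 6)) * Real.cos (π * (1 / 6 - x)) +
      Real.cos (π * (x + 1 / 6)) * Real.sin (π * (1 / 6 - x)) = √3 / 2 := by
    rw [arg1, arg2]
    simp only [Real.sin_add, Real.sin_sub, Real.cos_add, Real.cos_sub, Real.cos_pi_div_six,
      Real.sin_pi_div_six]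
    linear_combination √3 / 2 * hs
  refine this.congr_deriv ?_
  rw [hM]
  rw [Pi.div_apply]
  clear hM hs hcc h3 this e1 e2 e3
  generalize Real.sin (π * (x + 1 / 6)) = s1 at *
  generalize Real.sin (π * (1 / 6 - x)) = s2 at *
  generalize Real.cos (π * (x + 1 / 6)) = c1 at *
  generalize Real.cos (π * (1 / 6 - x)) = c2 at *
  field_simp
  linear_combination (-4) * hN

lemma comp_bigO {H : ℝ → ℝ} (hH : H =O[𝓝 0] fun x : ℝ => x ^ 8) (p q : ℝ) :
    (fun x : ℝ => H (p * x + q * x ^ 3)) =O[𝓝 0] fun x : ℝ => x ^ 8 := by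
  have ht : Tendsto (fun x : ℝ => p * x + q * x ^ 3) (𝓝 0) (𝓝 0) := by
    have : ContinuousAt (fun x : ℝ => p * x + q * x ^ 3) 0 := by fun_prop
    simpa [ContinuousAt] using this
  refine (hH.comp_tendsto ht).trans ?_
  have hc : (fun x : ℝ => (p + q * x ^ 2) ^ 8) =O[𝓝 0] fun _ : ℝ => (1 : ℝ) := by
    have : ContinuousAt (fun x : ℝ => (p + q * x ^ 2) ^ 8) 0 := by fun_prop
    exact this.isBigO_one ℝ
  refine (hc.mul (isBigO_refl (fun x : ℝ => x ^ 8) _)).congr ?_ ?_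
  · intro x
    simp only [Function.comp]
    ring
  · intro x
    ring

/-- remainder of the fourth power -/
def r4 (p q y : ℝ) : ℝ := 6 * p ^ 2 * q ^ 2 + 4 * p * q ^ 3 * y + q ^ 4 * y ^ 2

/-- remainder of the sixth power -/
def r6 (p q y : ℝ) : ℝ := 6 * p ^ 5 * q + 15 * p ^ 4 * q ^ 2 * y + 20 * p ^ 3 * q ^ 3 * y ^ 2
  + 15 * p ^ 2 * q ^ 4 * y ^ 3 + 6 * p * q ^ 5 * y ^ 4 + q ^ 6 * y ^ 5

lemma pow4_eq (p q x : ℝ) : (p * x + q * x ^ 3) ^ 4 =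
    p ^ 4 * x ^ 4 + 4 * p ^ 3 * q * x ^ 6 + r4 p q (x ^ 2) * x ^ 8 := by
  unfold r4; ring

lemma pow6_eq (p q x : ℝ) : (p * x + q * x ^ 3) ^ 6 =
    p ^ 6 * x ^ 6 + r6 p q (x ^ 2) * x ^ 8 := by
  unfold r6; ring

lemma poly_bigO (k : ℝ) (hk : k = 16 * π ^ 2 / 729) : ∃ R : ℝ → ℝ, Continuous R ∧ ∀ x : ℝ,
    3 * (2 * √3 * π * (1 * (2 / 9 * x + (-k / 6) * x ^ 3) ^ 2 / 2
      + 1 * (2 * π) ^ 2 * (2 / 9 * x + (-k / 6) * x ^ 3) ^ 4 / 12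
      + 11 / 12 * (2 * π) ^ 4 * (2 / 9 * x + (-k / 6) * x ^ 3) ^ 6 / 30)) +
    6 * (2 * √3 * π * (1 * (1 / 9 * x + (k / 6) * x ^ 3) ^ 2 / 2
      + 1 * (2 * π) ^ 2 * (1 / 9 * x + (k / 6) * x ^ 3) ^ 4 / 12
      + 11 / 12 * (2 * π) ^ 4 * (1 / 9 * x + (k / 6) * x ^ 3) ^ 6 / 30)) +
    6 * (-2 * √3 * π * (1 / 3 * (1 / 3 * x + 0 * x ^ 3) ^ 2 / 2
      + 1 / 9 * (2 * π) ^ 2 * (1 / 3 * x + 0 * x ^ 3) ^ 4 / 12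
      + 1 / 36 * (2 * π) ^ 4 * (1 / 3 * x + 0 * x ^ 3) ^ 6 / 30)) = R x * x ^ 8 := by
  refine ⟨fun x => 3 * (2 * √3 * π * ((2 * π) ^ 2 * r4 (2 / 9) (-k / 6) (x ^ 2) / 12
      + 11 / 12 * (2 * π) ^ 4 * r6 (2 / 9) (-k / 6) (x ^ 2) / 30)) +
    6 * (2 * √3 * π * ((2 * π) ^ 2 * r4 (1 / 9) (k / 6) (x ^ 2) / 12
      + 11 / 12 * (2 * π) ^ 4 * r6 (1 / 9) (k / 6) (x ^ 2) / 30)), ?_, ?_⟩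
  · unfold r4 r6
    fun_prop
  · intro x
    simp only [pow4_eq, pow6_eq]
    generalize r4 (2 / 9) (-k / 6) (x ^ 2) = A
    generalize r4 (1 / 9) (k / 6) (x ^ 2) = B
    generalize r6 (2 / 9) (-k / 6) (x ^ 2) = C
    generalize r6 (1 / 9) (k / 6) (x ^ 2) = D
    have e1 : r4 (1 / 3) 0 (x ^ 2) = 0 := by simp [r4]
    have e2 : r6 (1 / 3) 0 (x ^ 2) = 0 := by simp [r6]
    rw [e1, e2, hk]
    ring

theorem trajectory_near_one :
    vTilde 1 = 0 ∧
    ∃ C : ℝ, 0 < C ∧ ∃ δ : ℝ, 0 < δ ∧ ∀ s : ℝ, |s - 1| < δ →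
      |rateI s (vTilde s)| ≤ C * |s - 1| ^ 8 := by
  refine ⟨by simp [vTilde], ?_⟩
  set k : ℝ := 16 * π ^ 2 / 729 with hk
  have hs0 : Real.sin (π * (0 + 1 / 6)) ≠ 0 := by rw [arg1]; simp
  have hc0 : Real.cos (π * (0 + 1 / 6)) ≠ 0 := by rw [arg1]; simp
  have hF := int_bigO _ (-1) (2 * √3 * π) 1 1 (11 / 12) (by norm_num) (by norm_num) (by norm_num)
    (by norm_num) (by rw [zero_add] at *; rw [sub_zero, div_self hs0, Real.log_one]) sin_deriv
  have hG := int_bigO _ 1 (-2 * √3 * π) (1 / 3) (1 / 9) (1 / 36) (by norm_num) (by norm_num)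
    (by norm_num)
    (by norm_num) (by rw [zero_add] at *; rw [sub_zero, div_self hc0, Real.log_one]) cos_deriv
  have hA := comp_bigO hF (2 / 9) (-k / 6)
  have hB := comp_bigO hF (1 / 9) (k / 6)
  have hC := comp_bigO hG (1 / 3) 0
  obtain ⟨R, hRc, hR⟩ := poly_bigO k hk
  have hRO : (fun x : ℝ => R x * x ^ 8) =O[𝓝 0] fun x : ℝ => x ^ 8 := by
    have := (hRc.continuousAt (x := 0)).isBigO_one ℝ
    simpa using this.mul (isBigO_refl (fun x : ℝ => x ^ 8) (𝓝 0))
  have htot := (((hA.const_mul_left 3).add (hB.const_mul_left 6)).add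
    (hC.const_mul_left 6)).add hRO
  have hI : (fun x : ℝ => rateI (1 - x) (vTilde (1 - x))) =O[𝓝 0] fun x : ℝ => x ^ 8 := by
    refine htot.congr_left fun x => ?_
    rw [← hR x]
    have a1 : (1 - (1 - x) - vTilde (1 - x)) / 6 = 2 / 9 * x + (-k / 6) * x ^ 3 := by
      rw [vTilde, hk]; ring
    have a2 : (1 - (1 - x) + vTilde (1 - x)) / 6 = 1 / 9 * x + (k / 6) * x ^ 3 := by
      rw [vTilde, hk]; ring
    have a3 : (1 - (1 - x)) / 3 = 1 / 3 * x + 0 * x ^ 3 := by ring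
    rw [rateI, a1, a2, a3]
    ring
  obtain ⟨C, hC, hb⟩ := hI.exists_pos
  obtain ⟨δ, hδ, hball⟩ := Metric.eventually_nhds_iff.1 hb.bound
  refine ⟨C, hC, δ, hδ, fun s hs => ?_⟩
  have := hball (y := 1 - s) (by simpa [Real.dist_eq, abs_sub_comm] using hs)
  simpa [abs_sub_comm, sub_sub_cancel] using this
end

section
/- Let s ∈ (0,2) and ξ ∈ ℝ. Let (T_j) be a sequence of positive integers tending to infinity, (t_j) integers with 0 ≤ t_j ≤ 2T_j and t_j/T_j → s, and (x_j) integers with t_j + x_j even and x_j/√(T_j) → ξ. Then (√(T_j)/2) · [C(t_j, (t_j+x_j)/2) · C(2T_j−t_j, ((2T_j−t_j)+x_j)/2) / C(2T_j, T_j)] converges to (1/√(π s(2−s))) · exp(−ξ²/(s(2−s))) as j → ∞, where C(n,k) denotes the binomial coefficient. That is, the single-time distribution of the classical random-walk excursion converges to the probability density of the Brownian bridge of duration 2. -/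
open scoped Real
open Filter

lemma aux_g_bound (u : ℝ) (hu : |u| ≤ 1/2) :
    |(1+u)*Real.log (1+u) + (1-u)*Real.log (1-u) - u^2| ≤ 8*|u|^3 := by
  have key : ∀ v : ℝ, |v| ≤ 1/2 → |v + v^2/2 + Real.log (1-v)| ≤ 2*|v|^3 := by
    intro v hv
    have h := Real.abs_log_sub_add_sum_range_le (x := v) (by linarith) 2
    simp only [Finset.sum_range_succ, Finset.sum_range_zero] at h
    norm_num at h
    refine h.trans ?_
    rw [div_le_iff₀ (by linarith)]
    nlinarith [pow_nonneg (abs_nonneg v) 3]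
  have h1 := key u hu
  have h2 := key (-u) (by simpa using hu)
  rw [abs_neg] at h2
  have h3 : (1+u)*Real.log (1+u) + (1-u)*Real.log (1-u) - u^2 =
      (1+u) * (-u + (-u)^2/2 + Real.log (1 - -u)) + (1-u) * (u + u^2/2 + Real.log (1-u)) := by
    rw [sub_neg_eq_add]; ring
  obtain ⟨hl, hr⟩ := abs_le.1 hu
  rw [h3]
  refine (abs_add_le _ _).trans ?_
  rw [abs_mul, abs_mul, abs_of_nonneg (show (0:ℝ) ≤ 1+u by linarith),
    abs_of_nonneg (show (0:ℝ) ≤ 1-u by linarith)]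
  have h4 : (1+u) * |-u + (-u)^2/2 + Real.log (1 - -u)| ≤ 2 * (2*|u|^3) :=
    mul_le_mul (by linarith) h2 (abs_nonneg _) (by norm_num)
  have h5 : (1-u) * |u + u^2/2 + Real.log (1 - u)| ≤ 2 * (2*|u|^3) :=
    mul_le_mul (by linarith) h1 (abs_nonneg _) (by norm_num)
  linarith

lemma aux_factorial (n : ℕ) (hn : 0 < n) : ((Nat.factorial n : ℕ) : ℝ) =
    Stirling.stirlingSeq n * (Real.sqrt (2*n) * (Real.exp (n * Real.log n) / Real.exp n)) := by
  have hn' : (0:ℝ) < n := by exact_mod_cast hn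
  have h : ((n:ℝ) / Real.exp 1)^n = Real.exp (n * Real.log n) / Real.exp n := by
    rw [div_pow, ← Real.exp_nat_mul, mul_one, Real.exp_nat_mul, Real.exp_log hn']
  rw [← h, Stirling.stirlingSeq]
  rw [div_mul_cancel₀]
  positivity

lemma aux_identity (a b : ℕ) (ha : 0 < a) (hb : 0 < b) (u : ℝ)
    (hu : u = ((a:ℝ) - b) / (a + b)) :
    Real.sqrt ((a:ℝ)+b) * (Nat.choose (a+b) a : ℝ) / 2^(a+b) =
      Stirling.stirlingSeq (a+b) / (Stirling.stirlingSeq a * Stirling.stirlingSeq b) *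
      Real.sqrt (2 / ((1+u)*(1-u))) *
      Real.exp (-(((a:ℝ)+b)/2 * ((1+u)*Real.log (1+u) + (1-u)*Real.log (1-u)))) := by
  have ha' : (0:ℝ) < a := by exact_mod_cast ha
  have hb' : (0:ℝ) < b := by exact_mod_cast hb
  have hn' : (0:ℝ) < (a:ℝ)+b := by positivity
  have e1 : 1 + u = a / (((a:ℝ)+b)/2) := by rw [hu]; field_simp; ring
  have e2 : 1 - u = b / (((a:ℝ)+b)/2) := by rw [hu]; field_simp; ring
  have hSa : 0 < Stirling.stirlingSeq a := by unfold Stirling.stirlingSeq; positivity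
  have hSb : 0 < Stirling.stirlingSeq b := by unfold Stirling.stirlingSeq; positivity
  have hch : (Nat.choose (a+b) a : ℝ) = (Nat.factorial (a+b) : ℝ) /
      ((Nat.factorial a : ℝ) * (Nat.factorial b : ℝ)) := by
    rw [Nat.choose_symm_add, Nat.add_choose]
    rw [Nat.cast_div (Nat.factorial_mul_factorial_dvd_factorial_add a b) (by positivity)]
    push_cast; rfl
  have hexp : Real.exp (-(((a:ℝ)+b)/2 * ((1+u)*Real.log (1+u) + (1-u)*Real.log (1-u)))) =
      Real.exp (((a:ℝ)+b) * Real.log ((a:ℝ)+b)) /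
        (Real.exp (a * Real.log a) * Real.exp (b * Real.log b)) / 2^(a+b) := by
    have h2 : (2:ℝ)^(a+b) = Real.exp (((a:ℝ)+b) * Real.log 2) := by
      have := Real.exp_nat_mul (Real.log 2) (a+b)
      rw [Real.exp_log (by norm_num)] at this
      rw [← this]; push_cast; rfl
    rw [h2, ← Real.exp_add, ← Real.exp_sub, ← Real.exp_sub, e1, e2,
      Real.log_div ha'.ne' (by positivity), Real.log_div hb'.ne' (by positivity),
      Real.log_div hn'.ne' (by positivity)]
    congr 1
    field_simp
    ring
  have hsq : Real.sqrt (2 / ((1+u)*(1-u))) = Real.sqrt ((a:ℝ)+b) * Real.sqrt (2*((a:ℝ)+b)) /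
      (Real.sqrt (2*a) * Real.sqrt (2*b)) := by
    rw [← Real.sqrt_mul (by positivity), ← Real.sqrt_mul (by positivity),
      ← Real.sqrt_div (by positivity), e1, e2]
    congr 1
    field_simp
    try ring
  rw [hch, aux_factorial _ ha, aux_factorial _ hb, aux_factorial (a+b) (by omega), hexp, hsq]
  push_cast
  rw [Real.exp_add]
  have p1 := Real.sqrt_pos.2 (show (0:ℝ) < 2*a by positivity)
  have p2 := Real.sqrt_pos.2 (show (0:ℝ) < 2*b by positivity)
  have p3 := Real.exp_pos (a:ℝ)
  have p4 := Real.exp_pos (b:ℝ)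
  have p5 := Real.exp_pos ((a:ℝ) * Real.log a)
  have p6 := Real.exp_pos ((b:ℝ) * Real.log b)
  generalize Real.exp (a:ℝ) = A at *
  generalize Real.exp (b:ℝ) = B at *
  generalize Real.exp ((a:ℝ) * Real.log a) = A' at *
  generalize Real.exp ((b:ℝ) * Real.log b) = B' at *
  generalize Real.sqrt (2*(a:ℝ)) = C at *
  generalize Real.sqrt (2*(b:ℝ)) = D at *
  field_simp

lemma aux_nat (a b : ℕ → ℕ) (η : ℝ)
    (hn : Tendsto (fun j => (a j : ℝ) + b j) atTop atTop)
    (hx : Tendsto (fun j => ((a j : ℝ) - b j) / Real.sqrt ((a j : ℝ) + b j)) atTop (nhds η)) :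
    Tendsto (fun j => Real.sqrt ((a j : ℝ) + b j) * (Nat.choose (a j + b j) (a j) : ℝ) /
      2^(a j + b j)) atTop (nhds (Real.sqrt (2/π) * Real.exp (-(η^2/2)))) := by
  set u : ℕ → ℝ := fun j => ((a j : ℝ) - b j) / ((a j : ℝ) + b j) with hu
  have hsqrt : Tendsto (fun j => Real.sqrt ((a j : ℝ) + b j)) atTop atTop :=
    Real.tendsto_sqrt_atTop.comp hn
  have hu0 : Tendsto u atTop (nhds 0) := by
    refine (hx.div_atTop hsqrt).congr fun j => ?_
    rw [div_div, Real.mul_self_sqrt (by positivity)]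
  have hnu2 : Tendsto (fun j => ((a j : ℝ) + b j) * (u j)^2) atTop (nhds (η^2)) := by
    refine (hx.pow 2).congr' ?_
    filter_upwards [hn.eventually_gt_atTop 0] with j hj
    rw [div_pow, Real.sq_sqrt hj.le]
    simp only [hu]
    field_simp
  have hg : Tendsto (fun j => ((a j : ℝ) + b j)/2 *
      ((1+u j)*Real.log (1+u j) + (1-u j)*Real.log (1-u j))) atTop (nhds (η^2/2)) := by
    have herr : Tendsto (fun j => ((a j : ℝ) + b j)/2 *
      ((1+u j)*Real.log (1+u j) + (1-u j)*Real.log (1-u j) - (u j)^2)) atTop (nhds 0) := by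
      have hb : Tendsto (fun j => 4 * (((a j : ℝ) + b j) * (u j)^2) * |u j|) atTop (nhds 0) := by
        have := (hnu2.const_mul 4).mul hu0.abs
        simpa using this
      refine squeeze_zero_norm' ?_ hb
      have : ∀ᶠ j in atTop, |u j| < 1/2 := by
        have h := hu0.abs
        rw [abs_zero] at h
        exact h.eventually_lt_const (by norm_num)
      filter_upwards [this] with j hj
      rw [Real.norm_eq_abs, abs_mul, abs_of_nonneg (by positivity)]
      have h := mul_le_mul_of_nonneg_left (aux_g_bound (u j) hj.le)
        (show (0:ℝ) ≤ ((a j : ℝ) + b j)/2 by positivity)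
      refine h.trans (le_of_eq ?_)
      rw [← sq_abs (u j)]; ring
    have := herr.add (hnu2.div_const 2)
    rw [zero_add] at this
    refine this.congr fun j => ?_
    ring
  have ha1 : Tendsto (fun j => (a j : ℝ)) atTop atTop := by
    have h : Tendsto (fun j => (1 + u j)/2) atTop (nhds (1/2)) := by
      simpa using (hu0.const_add 1).div_const 2
    refine (hn.atTop_mul_pos (by norm_num) h).congr' ?_
    filter_upwards [hn.eventually_gt_atTop 0] with j hj
    simp only [hu]; field_simp; ring
  have hb1 : Tendsto (fun j => (b j : ℝ)) atTop atTop := by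
    have h : Tendsto (fun j => (1 - u j)/2) atTop (nhds (1/2)) := by
      simpa using (hu0.const_sub 1).div_const 2
    refine (hn.atTop_mul_pos (by norm_num) h).congr' ?_
    filter_upwards [hn.eventually_gt_atTop 0] with j hj
    simp only [hu]; field_simp; ring
  have haN : Tendsto a atTop atTop := tendsto_natCast_atTop_iff.1 ha1
  have hbN : Tendsto b atTop atTop := tendsto_natCast_atTop_iff.1 hb1
  have hnN : Tendsto (fun j => a j + b j) atTop atTop := haN.atTop_add_atTop hbN
  have S := Stirling.tendsto_stirlingSeq_sqrt_pi
  have hpi : 0 < Real.sqrt π := Real.sqrt_pos.2 Real.pi_pos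
  have L1 := (S.comp hnN).div ((S.comp haN).mul (S.comp hbN)) (by positivity)
  have L2 : Tendsto (fun j => Real.sqrt (2 / ((1+u j)*(1-u j)))) atTop (nhds (Real.sqrt 2)) := by
    have h := ((hu0.const_add 1).mul (hu0.const_sub 1))
    have h' := (tendsto_const_nhds (x := (2:ℝ))).div h (by norm_num)
    simpa using h'.sqrt
  have L3 := (Real.continuous_exp.tendsto _).comp hg.neg
  have L := (L1.mul L2).mul L3
  have hc : Real.sqrt (2/π) * Real.exp (-(η^2/2)) =
      Real.sqrt π / (Real.sqrt π * Real.sqrt π) * Real.sqrt 2 * Real.exp (-(η^2/2)) := by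
    rw [Real.sqrt_div (by norm_num)]
    field_simp
  rw [hc]
  refine L.congr' ?_
  filter_upwards [haN.eventually_gt_atTop 0, hbN.eventually_gt_atTop 0] with j h1 h2
  exact (aux_identity (a j) (b j) h1 h2 (u j) rfl).symm

lemma aux_int (n x : ℕ → ℤ) (η : ℝ)
    (hn : Tendsto (fun j => (n j : ℝ)) atTop atTop)
    (hpar : ∀ j, Even (n j + x j))
    (hx : Tendsto (fun j => (x j : ℝ) / Real.sqrt (n j : ℝ)) atTop (nhds η)) :
    Tendsto (fun j => Real.sqrt (n j : ℝ) *
      (Nat.choose (n j).toNat ((n j + x j)/2).toNat : ℝ) /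
      2^((n j).toNat)) atTop (nhds (Real.sqrt (2/π) * Real.exp (-(η^2/2)))) := by
  have hsqrt : Tendsto (fun j => Real.sqrt (n j : ℝ)) atTop atTop :=
    Real.tendsto_sqrt_atTop.comp hn
  have hlt : ∀ᶠ j in atTop, |x j| < n j := by
    have h := (hx.div_atTop hsqrt).abs
    rw [abs_zero] at h
    filter_upwards [h.eventually_lt_const one_pos, hn.eventually_gt_atTop 0] with j h1 h2
    rw [div_div, Real.mul_self_sqrt h2.le, abs_div, abs_of_pos h2, div_lt_one h2] at h1
    exact_mod_cast h1
  have hE : ∀ᶠ j in atTop, (n j).toNat = ((n j + x j)/2).toNat + ((n j - x j)/2).toNat ∧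
      (((((n j + x j)/2).toNat : ℕ) : ℤ) + ((((n j - x j)/2).toNat : ℕ) : ℤ) = n j) ∧
      (((((n j + x j)/2).toNat : ℕ) : ℤ) - ((((n j - x j)/2).toNat : ℕ) : ℤ) = x j) := by
    filter_upwards [hlt] with j hj
    obtain ⟨r, hr⟩ := hpar j
    obtain ⟨h1, h2⟩ := abs_lt.1 hj
    omega
  have hE' : ∀ᶠ j in atTop, (n j).toNat = ((n j + x j)/2).toNat + ((n j - x j)/2).toNat ∧
      (((((n j + x j)/2).toNat : ℕ) : ℝ) + ((((n j - x j)/2).toNat : ℕ) : ℝ) = n j) ∧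
      (((((n j + x j)/2).toNat : ℕ) : ℝ) - ((((n j - x j)/2).toNat : ℕ) : ℝ) = x j) := by
    filter_upwards [hE] with j hj
    obtain ⟨h0, h1, h2⟩ := hj
    exact ⟨h0, by exact_mod_cast congrArg (fun z : ℤ => (z : ℝ)) h1,
      by exact_mod_cast congrArg (fun z : ℤ => (z : ℝ)) h2⟩
  have := aux_nat (fun j => ((n j + x j)/2).toNat) (fun j => ((n j - x j)/2).toNat) η
    (hn.congr' (by filter_upwards [hE'] with j hj; exact hj.2.1.symm))
    (hx.congr' (by filter_upwards [hE'] with j hj; rw [hj.2.1, hj.2.2]))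
  refine this.congr' ?_
  filter_upwards [hE'] with j hj
  rw [hj.2.1, ← hj.1]

/-- Convergence of the single-time distribution of the classical random-walk excursion
to the probability density of the Brownian bridge of duration `2`. -/
theorem classical_excursion_to_brownian_bridge (s ξ : ℝ) (hs0 : 0 < s) (hs2 : s < 2)
    (T : ℕ → ℕ) (hTpos : ∀ j, 0 < T j)
    (hT : Tendsto (fun j => (T j : ℝ)) atTop atTop)
    (t : ℕ → ℤ) (ht0 : ∀ j, 0 ≤ t j ∧ t j ≤ 2 * (T j : ℤ))
    (hts : Tendsto (fun j => (t j : ℝ) / (T j : ℝ)) atTop (nhds s))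
    (x : ℕ → ℤ) (hpar : ∀ j, Even (t j + x j))
    (hxs : Tendsto (fun j => (x j : ℝ) / Real.sqrt (T j : ℝ)) atTop (nhds ξ)) :
    Tendsto (fun j => Real.sqrt (T j : ℝ) / 2 *
        ((Nat.choose (t j).toNat ((t j + x j) / 2).toNat *
            Nat.choose (2 * (T j : ℤ) - t j).toNat ((2 * (T j : ℤ) - t j + x j) / 2).toNat : ℝ) /
          (Nat.choose (2 * T j) (T j) : ℝ)))
      atTop
      (nhds (1 / Real.sqrt (π * s * (2 - s)) * Real.exp (-ξ ^ 2 / (s * (2 - s))))) := by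
  have hs2' : 0 < 2 - s := by linarith
  have hT0 : ∀ j, (0:ℝ) < T j := fun j => by exact_mod_cast hTpos j
  have hrt : Tendsto (fun j => ((2 * (T j : ℤ) - t j : ℤ) : ℝ) / (T j : ℝ)) atTop
      (nhds (2 - s)) := by
    refine (hts.const_sub 2).congr fun j => ?_
    have := hT0 j
    push_cast; field_simp
  have hn1 : Tendsto (fun j => (t j : ℝ)) atTop atTop := by
    refine (hT.atTop_mul_pos hs0 hts).congr fun j => ?_
    have := hT0 j
    field_simp
  have hn2 : Tendsto (fun j => ((2 * (T j : ℤ) - t j : ℤ) : ℝ)) atTop atTop := by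
    refine (hT.atTop_mul_pos hs2' hrt).congr fun j => ?_
    have := hT0 j
    field_simp
  have hn0 : Tendsto (fun j => ((2 * (T j : ℤ) : ℤ) : ℝ)) atTop atTop := by
    refine (hT.const_mul_atTop (show (0:ℝ) < 2 by norm_num)).congr fun j => ?_
    push_cast; rfl
  have hgen : ∀ (n : ℕ → ℤ) (r : ℝ), 0 < r →
      Tendsto (fun j => (n j : ℝ) / (T j : ℝ)) atTop (nhds r) →
      Tendsto (fun j => (x j : ℝ) / Real.sqrt (n j : ℝ)) atTop (nhds (ξ / Real.sqrt r)) := by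
    intro n r hr h
    refine (hxs.div h.sqrt (Real.sqrt_pos.2 hr).ne').congr fun j => ?_
    have := Real.sqrt_pos.2 (hT0 j)
    simp only [Pi.div_apply]
    rw [Real.sqrt_div' _ (hT0 j).le]
    field_simp
  have F1 := aux_int t x _ hn1 hpar (hgen t s hs0 hts)
  have F2 := aux_int (fun j => 2 * (T j : ℤ) - t j) x _ hn2
    (fun j => by have := hpar j; rw [Int.even_iff] at *; omega) (hgen _ _ hs2' hrt)
  have F0 := aux_int (fun j => 2 * (T j : ℤ)) (fun _ => 0) 0 hn0
    (fun j => by simp) (by simp)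
  have hP : Tendsto (fun j => Real.sqrt (1 / (2 * ((t j : ℝ) / T j) *
      (((2 * (T j : ℤ) - t j : ℤ) : ℝ) / (T j : ℝ))))) atTop
      (nhds (Real.sqrt (1 / (2 * s * (2 - s))))) :=
    (((tendsto_const_nhds (x := (1:ℝ))).div ((hts.const_mul 2).mul hrt) (by positivity))).sqrt
  have hF0 : Real.sqrt (2/π) * Real.exp (-((0:ℝ)^2/2)) ≠ 0 := by positivity
  have L := hP.mul ((F1.mul F2).div F0 hF0)
  have hc : 1 / Real.sqrt (π * s * (2 - s)) * Real.exp (-ξ ^ 2 / (s * (2 - s))) =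
      Real.sqrt (1 / (2 * s * (2 - s))) * (Real.sqrt (2/π) * Real.exp (-((ξ / Real.sqrt s)^2/2)) *
        (Real.sqrt (2/π) * Real.exp (-((ξ / Real.sqrt (2-s))^2/2))) /
        (Real.sqrt (2/π) * Real.exp (-((0:ℝ)^2/2)))) := by
    have e : Real.exp (-ξ ^ 2 / (s * (2 - s))) = Real.exp (-((ξ / Real.sqrt s)^2/2)) *
        Real.exp (-((ξ / Real.sqrt (2-s))^2/2)) := by
      rw [← Real.exp_add, div_pow, div_pow, Real.sq_sqrt hs0.le, Real.sq_sqrt hs2'.le]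
      congr 1
      field_simp
      ring
    have q : 1 / Real.sqrt (π * s * (2 - s)) =
        Real.sqrt (1 / (2 * s * (2 - s))) * Real.sqrt (2/π) := by
      rw [← Real.sqrt_mul (by positivity), ← Real.sqrt_one, ← Real.sqrt_div (by norm_num),
        Real.sqrt_one]
      congr 1
      field_simp
    have hp : 0 < Real.sqrt (2/π) := by positivity
    have z : Real.exp (-((0:ℝ)^2/2)) = 1 := by norm_num
    rw [e, q, z]
    field_simp
  rw [hc]
  refine L.congr' ?_
  filter_upwards [hn1.eventually_gt_atTop 0, hn2.eventually_gt_atTop 0] with j h1 h2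
  have hTj := hT0 j
  have k1 : (2 * (T j : ℤ)).toNat = 2 * T j := by omega
  have k2 : ((2 * (T j : ℤ) + 0) / 2).toNat = T j := by omega
  have k3 : (2:ℝ)^(2 * T j) = 2^(t j).toNat * 2^(2 * (T j : ℤ) - t j).toNat := by
    rw [← pow_add]; congr 1
    have := ht0 j
    omega
  have hC : (0:ℝ) < Nat.choose (2 * T j) (T j) := by
    exact_mod_cast Nat.choose_pos (by omega)
  have hq : Real.sqrt (1 / (2 * ((t j : ℝ) / T j) *
      (((2 * (T j : ℤ) - t j : ℤ) : ℝ) / (T j : ℝ)))) =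
      Real.sqrt (T j) / 2 * Real.sqrt ((2 * (T j : ℤ) : ℤ) : ℝ) /
        (Real.sqrt (t j) * Real.sqrt ((2 * (T j : ℤ) - t j : ℤ) : ℝ)) := by
    have h4 : (2:ℝ) = Real.sqrt 4 := by
      rw [show (4:ℝ) = 2^2 by norm_num, Real.sqrt_sq (by norm_num)]
    have hA : Real.sqrt (T j) / 2 = Real.sqrt (T j / 4) := by
      rw [Real.sqrt_div hTj.le, ← h4]
    have h0 : (((2 * (T j : ℤ) : ℤ)) : ℝ) = 2 * T j := by push_cast; rfl
    rw [hA, h0, ← Real.sqrt_mul (by positivity), ← Real.sqrt_mul h1.le,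
      ← Real.sqrt_div (by positivity)]
    congr 1
    field_simp
    norm_num
  simp only [Pi.div_apply]
  rw [hq, k1, k2, k3]
  have p1 := Real.sqrt_pos.2 h1
  have p2 := Real.sqrt_pos.2 h2
  have p3 : 0 < Real.sqrt ((2 * (T j : ℤ) : ℤ) : ℝ) :=
    Real.sqrt_pos.2 (by push_cast; positivity)
  generalize Real.sqrt ((2 * (T j : ℤ) : ℤ) : ℝ) = A at *
  generalize Real.sqrt ((2 * (T j : ℤ) - t j : ℤ) : ℝ) = B at *
  generalize Real.sqrt (t j : ℝ) = C at *
  field_simp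
end
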